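/- Fix T > 0, ε > 0, and K > 0. Let w = (w₁,w₂,w₃) : [0,T] × ℝ² × (−∞,0] → ℝ³ be a smooth vector field, bounded together with all its partial derivatives, satisfying w₃(t,y,0) = 0 for all t, y. Let ρ, 𝓗 : [0,T] × ℝ² × (−∞,0] → ℝ be smooth, vanishing for z ≤ −K, such that for every t all the quantities below are finite, and suppose that ρ solves ∂_tρ + w·∇ρ = ε ∂_zzρ + 𝓗 on (0,T) × S with ρ(t,y,0) = 0. Then there is a constant C, independent of ε, T, w, ρ, 𝓗, such that for i = 1,2,3 and all t ∈ [0,T]: ‖Z_i ρ(t)‖_{L^∞(S)} ≤ C ( ‖Z_i ρ(0)‖_{L^∞} + ‖ρ(0)‖_{L^∞} + ∫_0^t [ ( ‖w(s)‖_{E^{2,∞}} + ‖∂_zz w₃(s)‖_{L^∞} ) ( ‖ρ(s)‖_{1,∞} + ‖ρ(s)‖_4 ) + ‖𝓗(s)‖_{1,∞} ] ds ). -/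

import Mathlib

open MeasureTheory
open scoped ENNReal

/-- The lower half-space `S = ℝ² × (−∞, 0)`, with points `x = (y, z)`. -/
def lowerHalf : Set ((Fin 2 → ℝ) × ℝ) := {x | x.2 < 0}

/-- The normal derivative `∂_z g`. -/
noncomputable def dzD (g : ((Fin 2 → ℝ) × ℝ) → ℝ) (x : (Fin 2 → ℝ) × ℝ) : ℝ :=
  fderiv ℝ g x ((0 : Fin 2 → ℝ), (1 : ℝ))

/-- The conormal vector fields: `Z₁ = ∂_{y₁}`, `Z₂ = ∂_{y₂}`, `Z₃ = (z/(1−z)) ∂_z`. -/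
noncomputable def Zop (i : Fin 3) (g : ((Fin 2 → ℝ) × ℝ) → ℝ) :
    ((Fin 2 → ℝ) × ℝ) → ℝ :=
  if i = 0 then fun x => fderiv ℝ g x (Pi.single 0 1, (0 : ℝ))
  else if i = 1 then fun x => fderiv ℝ g x (Pi.single 1 1, (0 : ℝ))
  else fun x => x.2 / (1 - x.2) * dzD g x

/-- Iterated conormal derivative `Z^α = Z₁^{α₁} Z₂^{α₂} Z₃^{α₃}`. -/
noncomputable def Zpow (α : Fin 3 → ℕ) (g : ((Fin 2 → ℝ) × ℝ) → ℝ) :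
    ((Fin 2 → ℝ) × ℝ) → ℝ :=
  (Zop 0)^[α 0] ((Zop 1)^[α 1] ((Zop 2)^[α 2] g))

/-- The multi-indices `α` with `|α| ≤ k`. -/
def multiIdx (k : ℕ) : Finset (Fin 3 → ℕ) :=
  (Finset.Icc (0 : Fin 3 → ℕ) fun _ => k).filter fun α => α 0 + α 1 + α 2 ≤ k

/-- The `L^∞(S)` norm (as an extended nonnegative real). -/
noncomputable def supNormS (g : ((Fin 2 → ℝ) × ℝ) → ℝ) : ℝ≥0∞ :=
  ⨆ x ∈ lowerHalf, (‖g x‖₊ : ℝ≥0∞)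

/-- The conormal norm `‖g‖_{k,∞} = Σ_{|α| ≤ k} ‖Z^α g‖_{L^∞(S)}`. -/
noncomputable def conormInf (k : ℕ) (g : ((Fin 2 → ℝ) × ℝ) → ℝ) : ℝ≥0∞ :=
  ∑ α ∈ multiIdx k, supNormS (Zpow α g)

/-- The conormal Sobolev norm `‖g‖_m = (Σ_{|α| ≤ m} ‖Z^α g‖²_{L²(S)})^{1/2}`. -/
noncomputable def conormL2 (k : ℕ) (g : ((Fin 2 → ℝ) × ℝ) → ℝ) : ℝ≥0∞ :=
  (∑ α ∈ multiIdx k, ∫⁻ x in lowerHalf, (‖Zpow α g x‖₊ : ℝ≥0∞) ^ 2) ^ ((1 : ℝ) / 2)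

/-- `‖w(s)‖_{E^{2,∞}} = ‖w(s)‖_{2,∞} + ‖∂_z w(s)‖_{1,∞}` (summed over the components). -/
noncomputable def wE2inf (w : ℝ → ((Fin 2 → ℝ) × ℝ) → Fin 3 → ℝ) (s : ℝ) : ℝ≥0∞ :=
  (∑ i : Fin 3, conormInf 2 (fun x => w s x i))
    + ∑ i : Fin 3, conormInf 1 (dzD (fun x => w s x i))

/-!
Bernstein's method, instead of the Green function of the one-dimensional operator.

If `L = ∂_t + w·∇ - ε ∂_zz` and `L ρ = 𝓗`, then `F = (Z_i ρ)² + (2ρ)²` satisfies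
`L F ≤ 2 √F G`, where `G` is built from `𝓗`, `Z_i 𝓗` and the commutator `[Z_i, w·∇] ρ` only. Indeed
`(2ρ)²` contributes `-8ε (∂_z ρ)²`, and this absorbs the commutator of the weight `c = z / (1 - z)`
of `Z₃` with `ε ∂_zz`, because `c c'' - 3 c'² ≥ -4` for `z ≤ 0`. Since `w₃` vanishes at `z = 0`, the
quotient `w₃ / z` is bounded by `∂_z w₃`, so each `∂_z ρ` in the transport commutator can be traded
for `Z₃ ρ`, and `G` is bounded by `‖w‖_{E^{2,∞}} ‖ρ‖_{1,∞} + ‖𝓗‖_{1,∞}` uniformly in `ε`.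

The maximum principle compares `F` with `b²`, where `b(t) = m + ∫₀ᵗ sup G`. As `F` need not decay in
`y`, one adds to `b` a barrier moving at the speed `sup |w|`, which is large on the lateral
boundary of a cylinder and vanishes at the point where `F` is estimated.
-/

open Set Filter Topology

section DirectionalDerivative

variable {V : Type*} [NormedAddCommGroup V] [NormedSpace ℝ V] {f g : V → ℝ} {X : V}

/-- The derivative `∂_v f` of a scalar function in the direction `v`, as a function of the base
point, so that it can be iterated. -/
noncomputable def dirDeriv (v : V) (f : V → ℝ) (X : V) : ℝ :=
  fderiv ℝ f X v

lemma contDiffAt_dirDeriv {m k : WithTop ℕ∞} (hf : ContDiffAt ℝ k f X) (hmk : m + 1 ≤ k) (v : V) :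
    ContDiffAt ℝ m (dirDeriv v f) X :=
  (hf.fderiv_right hmk).clm_apply contDiffAt_const

lemma eventuallyEq_dirDeriv (hfg : f =ᶠ[𝓝 X] g) (v : V) :
    dirDeriv v f =ᶠ[𝓝 X] dirDeriv v g :=
  hfg.fderiv.mono fun _ h => congrArg (fun L : V →L[ℝ] ℝ => L v) h

lemma dirDeriv_add (hf : DifferentiableAt ℝ f X) (hg : DifferentiableAt ℝ g X) (v : V) :
    dirDeriv v (fun Y => f Y + g Y) X = dirDeriv v f X + dirDeriv v g X := by
  simp only [dirDeriv, fderiv_fun_add hf hg, add_apply]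

lemma dirDeriv_mul (hf : DifferentiableAt ℝ f X) (hg : DifferentiableAt ℝ g X) (v : V) :
    dirDeriv v (fun Y => f Y * g Y) X = f X * dirDeriv v g X + g X * dirDeriv v f X := by
  simp only [dirDeriv, fderiv_fun_mul hf hg, add_apply, smul_apply, smul_eq_mul]

lemma eventually_differentiableAt {m : WithTop ℕ∞} (hf : ContDiffAt ℝ m f X) (hm : 1 ≤ m) :
    ∀ᶠ Y in 𝓝 X, DifferentiableAt ℝ f Y :=
  ((hf.of_le hm).eventually (by simp)).mono fun _ h => h.differentiableAt one_ne_zero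

lemma dirDeriv_dirDeriv_add (hf : ContDiffAt ℝ 2 f X) (hg : ContDiffAt ℝ 2 g X) (v : V) :
    dirDeriv v (dirDeriv v fun Y => f Y + g Y) X
      = dirDeriv v (dirDeriv v f) X + dirDeriv v (dirDeriv v g) X := by
  have first_order : dirDeriv v (fun Y => f Y + g Y)
      =ᶠ[𝓝 X] fun Y => dirDeriv v f Y + dirDeriv v g Y := by
    filter_upwards [eventually_differentiableAt hf one_le_two,
      eventually_differentiableAt hg one_le_two] with Y hfY hgY using dirDeriv_add hfY hgY v
  have hf' := contDiffAt_dirDeriv (m := 1) hf one_add_one_eq_two.le v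
  have hg' := contDiffAt_dirDeriv (m := 1) hg one_add_one_eq_two.le v
  rw [(eventuallyEq_dirDeriv first_order v).eq_of_nhds,
    dirDeriv_add (hf'.differentiableAt one_ne_zero) (hg'.differentiableAt one_ne_zero)]

lemma dirDeriv_dirDeriv_mul (hf : ContDiffAt ℝ 2 f X) (hg : ContDiffAt ℝ 2 g X) (v : V) :
    dirDeriv v (dirDeriv v fun Y => f Y * g Y) X
      = f X * dirDeriv v (dirDeriv v g) X + 2 * (dirDeriv v f X * dirDeriv v g X)
        + g X * dirDeriv v (dirDeriv v f) X := by
  have first_order : dirDeriv v (fun Y => f Y * g Y)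
      =ᶠ[𝓝 X] fun Y => f Y * dirDeriv v g Y + g Y * dirDeriv v f Y := by
    filter_upwards [eventually_differentiableAt hf one_le_two,
      eventually_differentiableAt hg one_le_two] with Y hfY hgY using dirDeriv_mul hfY hgY v
  have hf₀ := hf.differentiableAt two_ne_zero
  have hg₀ := hg.differentiableAt two_ne_zero
  have hf₁ := (contDiffAt_dirDeriv (m := 1) hf one_add_one_eq_two.le v).differentiableAt one_ne_zero
  have hg₁ := (contDiffAt_dirDeriv (m := 1) hg one_add_one_eq_two.le v).differentiableAt one_ne_zero
  rw [(eventuallyEq_dirDeriv first_order v).eq_of_nhds,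
    dirDeriv_add (hf₀.fun_mul hg₁) (hg₀.fun_mul hf₁), dirDeriv_mul hf₀ hg₁, dirDeriv_mul hg₀ hf₁]
  ring

lemma fderiv_dirDeriv (hf : ContDiffAt ℝ 2 f X) (u v : V) :
    fderiv ℝ (dirDeriv v f) X u = fderiv ℝ (fderiv ℝ f) X u v := by
  have hf' : DifferentiableAt ℝ (fderiv ℝ f) X :=
    (hf.fderiv_right (m := 1) one_add_one_eq_two.le).differentiableAt one_ne_zero
  have h := fderiv_clm_apply hf' (differentiableAt_const v)
  simp only [fderiv_fun_const, Pi.zero_apply, ContinuousLinearMap.comp_zero, zero_add] at h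
  exact congrArg (fun L : V →L[ℝ] ℝ => L u) h

lemma dirDeriv_comm (hf : ContDiffAt ℝ 2 f X) (u v : V) :
    dirDeriv u (dirDeriv v f) X = dirDeriv v (dirDeriv u f) X := by
  rw [dirDeriv, dirDeriv, fderiv_dirDeriv hf, fderiv_dirDeriv hf]
  exact hf.isSymmSndFDerivAt (by simp) u v

lemma hasDerivAt_comp_line {v : V} {h : ℝ} (hf : DifferentiableAt ℝ f (X + h • v)) :
    HasDerivAt (fun s : ℝ => f (X + s • v)) (dirDeriv v f (X + h • v)) h := by
  have hline : HasDerivAt (fun s : ℝ => X + s • v) v h := by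
    simpa using ((hasDerivAt_id h).smul_const v).const_add X
  exact hf.hasFDerivAt.comp_hasDerivAt h hline

lemma dirDeriv_eq_zero_of_const_on_line {v : V} {a : ℝ} (hf : DifferentiableAt ℝ f X)
    (hconst : ∀ h : ℝ, f (X + h • v) = a) : dirDeriv v f X = 0 := by
  have hd := hasDerivAt_comp_line (X := X) (v := v) (h := 0) (by simpa using hf)
  simp only [hconst, zero_smul, add_zero] at hd
  exact hd.unique (hasDerivAt_const _ _)

end DirectionalDerivative

section ConvectionDiffusion

variable {E : Type*} [NormedAddCommGroup E] [NormedSpace ℝ E]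
  {ε : ℝ} {w : ℝ × E → E} {n : E} {f g : ℝ × E → ℝ} {X : ℝ × E}

/-- The convection–diffusion operator `∂_t + w·∇ - ε ∂_n²` on functions of space-time `ℝ × E`,
degenerate in the sense that it diffuses in the single direction `n`. -/
noncomputable def convDiff (ε : ℝ) (w : ℝ × E → E) (n : E) (f : ℝ × E → ℝ) (X : ℝ × E) : ℝ :=
  fderiv ℝ f X (1, w X) - ε * dirDeriv (0, n) (dirDeriv (0, n) f) X

lemma convDiff_add (hf : ContDiffAt ℝ 2 f X) (hg : ContDiffAt ℝ 2 g X) :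
    convDiff ε w n (fun Y => f Y + g Y) X = convDiff ε w n f X + convDiff ε w n g X := by
  have transport := dirDeriv_add (hf.differentiableAt two_ne_zero)
    (hg.differentiableAt two_ne_zero) (1, w X)
  simp only [dirDeriv] at transport
  rw [convDiff, transport, dirDeriv_dirDeriv_add hf hg]
  simp only [convDiff]
  ring

lemma convDiff_const_mul (a : ℝ) (hf : ContDiffAt ℝ 2 f X) :
    convDiff ε w n (fun Y => a * f Y) X = a * convDiff ε w n f X := by
  have first_order : dirDeriv (0, n) (fun Y => a * f Y)
      =ᶠ[𝓝 X] fun Y => a * dirDeriv (0, n) f Y :=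
    (eventually_differentiableAt hf one_le_two).mono fun Y hY => by
      simp only [dirDeriv, fderiv_const_mul hY, smul_apply, smul_eq_mul]
  have hf' : DifferentiableAt ℝ (dirDeriv (0, n) f) X :=
    (contDiffAt_dirDeriv (m := 1) hf one_add_one_eq_two.le _).differentiableAt one_ne_zero
  have second_order := (eventuallyEq_dirDeriv first_order (0, n)).eq_of_nhds
  rw [convDiff, convDiff, second_order, dirDeriv, fderiv_const_mul hf',
    fderiv_const_mul (hf.differentiableAt two_ne_zero)]
  simp only [smul_apply, smul_eq_mul, dirDeriv]
  ring

lemma convDiff_mul (hf : ContDiffAt ℝ 2 f X) (hg : ContDiffAt ℝ 2 g X) :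
    convDiff ε w n (fun Y => f Y * g Y) X
      = f X * convDiff ε w n g X + g X * convDiff ε w n f X
        - 2 * ε * (dirDeriv (0, n) f X * dirDeriv (0, n) g X) := by
  have transport := dirDeriv_mul (hf.differentiableAt two_ne_zero)
    (hg.differentiableAt two_ne_zero) (1, w X)
  simp only [dirDeriv] at transport
  rw [convDiff, transport, dirDeriv_dirDeriv_mul hf hg]
  simp only [convDiff]
  ring

lemma convDiff_sq (hf : ContDiffAt ℝ 2 f X) :
    convDiff ε w n (fun Y => f Y ^ 2) X
      = 2 * f X * convDiff ε w n f X - 2 * ε * dirDeriv (0, n) f X ^ 2 := by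
  simp only [sq, convDiff_mul hf hf]
  ring

lemma dirDeriv_transport (hf : ContDiffAt ℝ 2 f X) (hw : DifferentiableAt ℝ w X) (v : ℝ × E) :
    dirDeriv v (fun Y => fderiv ℝ f Y (1, w Y)) X
      = fderiv ℝ (dirDeriv v f) X (1, w X) + fderiv ℝ f X (0, fderiv ℝ w X v) := by
  have hf' : DifferentiableAt ℝ (fderiv ℝ f) X :=
    (hf.fderiv_right (m := 1) one_add_one_eq_two.le).differentiableAt one_ne_zero
  have hW : HasFDerivAt (fun Y => ((1 : ℝ), w Y)) ((0 : ℝ × E →L[ℝ] ℝ).prod (fderiv ℝ w X)) X :=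
    (hasFDerivAt_const 1 X).prodMk hw.hasFDerivAt
  have symmetric : fderiv ℝ (fderiv ℝ f) X v (1, w X) = fderiv ℝ (fderiv ℝ f) X (1, w X) v :=
    hf.isSymmSndFDerivAt (by simp) v (1, w X)
  rw [dirDeriv, fderiv_clm_apply hf' hW.differentiableAt, hW.fderiv, fderiv_dirDeriv hf,
    ← symmetric]
  simp [add_comm]

lemma convDiff_dirDeriv (hf : ContDiffAt ℝ 3 f X) (hw : DifferentiableAt ℝ w X) (v : ℝ × E) :
    convDiff ε w n (dirDeriv v f) X
      = dirDeriv v (convDiff ε w n f) X - fderiv ℝ f X (0, fderiv ℝ w X v) := by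
  have hf₂ : ContDiffAt ℝ 2 f X := hf.of_le (by norm_num)
  have hfn : ContDiffAt ℝ 2 (dirDeriv (0, n) f) X := contDiffAt_dirDeriv hf (by norm_num) _
  have hfnn : DifferentiableAt ℝ (dirDeriv (0, n) (dirDeriv (0, n) f)) X :=
    (contDiffAt_dirDeriv (m := 1) hfn (by norm_num) _).differentiableAt one_ne_zero
  have hf' : DifferentiableAt ℝ (fderiv ℝ f) X :=
    (hf₂.fderiv_right (m := 1) (by norm_num)).differentiableAt one_ne_zero
  have htransport : DifferentiableAt ℝ (fun Y => fderiv ℝ f Y (1, w Y)) X :=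
    hf'.clm_apply ((differentiableAt_const _).prodMk hw)
  have mixed : dirDeriv v (dirDeriv (0, n) f) =ᶠ[𝓝 X] dirDeriv (0, n) (dirDeriv v f) :=
    (hf₂.eventually (by simp)).mono fun Y hY => dirDeriv_comm hY v (0, n)
  have diffusion : dirDeriv v (dirDeriv (0, n) (dirDeriv (0, n) f)) X
      = dirDeriv (0, n) (dirDeriv (0, n) (dirDeriv v f)) X := by
    rw [dirDeriv_comm hfn, (eventuallyEq_dirDeriv mixed (0, n)).eq_of_nhds]
  have split : dirDeriv v (convDiff ε w n f) X = dirDeriv v (fun Y => fderiv ℝ f Y (1, w Y)) X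
      - ε * dirDeriv v (dirDeriv (0, n) (dirDeriv (0, n) f)) X := by
    have h := fderiv_fun_sub htransport (hfnn.const_mul ε)
    rw [fderiv_const_mul hfnn] at h
    exact congrArg (fun L : ℝ × E →L[ℝ] ℝ => L v) h
  rw [split, dirDeriv_transport hf₂ hw, diffusion, convDiff]
  ring

lemma deriv_deriv_nonpos_of_isLocalMax {φ : ℝ → ℝ} {a : ℝ} (hmax : IsLocalMax φ a)
    (hφ : ContinuousAt φ a) : deriv (deriv φ) a ≤ 0 := by
  by_contra! hpos
  have hmin : IsLocalMin φ a := isLocalMin_of_deriv_deriv_pos hpos hmax.deriv_eq_zero hφ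
  have hconst : φ =ᶠ[𝓝 a] fun _ => φ a := by
    filter_upwards [hmin, hmax] with h hge hle using le_antisymm hle hge
  have hzero : deriv (deriv φ) a = 0 := by
    rw [hconst.deriv.deriv_eq]
    simp
  exact hpos.ne' hzero

lemma dirDeriv_dirDeriv_nonpos_of_isLocalMax_line {V : Type*} [NormedAddCommGroup V]
    [NormedSpace ℝ V] {F : V → ℝ} {X v : V} (hF : ContDiffAt ℝ 2 F X)
    (hmax : IsLocalMax (fun h : ℝ => F (X + h • v)) 0) : dirDeriv v (dirDeriv v F) X ≤ 0 := by
  have hline : Tendsto (fun h : ℝ => X + h • v) (𝓝 0) (𝓝 X) := by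
    have : Continuous fun h : ℝ => X + h • v := by fun_prop
    simpa using this.tendsto 0
  have first_order : deriv (fun h : ℝ => F (X + h • v))
      =ᶠ[𝓝 0] fun h => dirDeriv v F (X + h • v) :=
    (hline.eventually (eventually_differentiableAt hF one_le_two)).mono
      fun h hh => (hasDerivAt_comp_line hh).deriv
  have hF' := (contDiffAt_dirDeriv (m := 1) hF one_add_one_eq_two.le v).differentiableAt one_ne_zero
  have second_order : deriv (deriv fun h : ℝ => F (X + h • v)) 0 = dirDeriv v (dirDeriv v F) X := by
    rw [first_order.deriv_eq]
    simpa using (hasDerivAt_comp_line (h := 0) (v := v) (X := X) (by simpa using hF')).deriv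
  have hcont : ContinuousAt (fun h : ℝ => F (X + h • v)) 0 :=
    ContinuousAt.comp (by simpa using hF.continuousAt) (by fun_prop)
  exact second_order ▸ deriv_deriv_nonpos_of_isLocalMax hmax hcont

lemma fderiv_transport_le_convDiff_of_isLocalMaxOn {F B : ℝ × E → ℝ} (hε : 0 ≤ ε)
    (hF : ContDiffAt ℝ 2 F X) (hB : DifferentiableAt ℝ B X)
    (hBn : ∀ h : ℝ, B (X + h • ((0 : ℝ), n)) = B X)
    (hmax : IsLocalMaxOn (fun Y => F Y - B Y) {Y | Y.1 ≤ X.1} X) :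
    fderiv ℝ B X (1, w X) ≤ convDiff ε w n F X := by
  have hF' := hF.differentiableAt two_ne_zero
  have backward : -((1 : ℝ), w X) ∈ posTangentConeAt {Y : ℝ × E | Y.1 ≤ X.1} X := by
    refine mem_posTangentConeAt_of_segment_subset ?_
    refine ((convex_Iic X.1).linear_preimage (LinearMap.fst ℝ ℝ E)).segment_subset ?_ ?_ <;> simp
  have first_order : fderiv ℝ B X (1, w X) ≤ fderiv ℝ F X (1, w X) := by
    have h := hmax.hasFDerivWithinAt_nonpos (hF'.hasFDerivAt.sub hB.hasFDerivAt).hasFDerivWithinAt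
      backward
    simp only [map_neg, sub_apply] at h
    linarith
  have hline : Tendsto (fun h : ℝ => X + h • ((0 : ℝ), n)) (𝓝 0) (𝓝[{Y | Y.1 ≤ X.1}] X) := by
    refine tendsto_nhdsWithin_iff.2 ⟨?_, .of_forall fun h => by simp⟩
    have : Continuous fun h : ℝ => X + h • ((0 : ℝ), n) := by fun_prop
    simpa using this.tendsto 0
  have second_order : dirDeriv (0, n) (dirDeriv (0, n) F) X ≤ 0 := by
    refine dirDeriv_dirDeriv_nonpos_of_isLocalMax_line hF ?_
    filter_upwards [hline.eventually hmax] with h hh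
    simp only [hBn, sub_le_sub_iff_right] at hh
    simpa using hh
  rw [convDiff]
  linarith [mul_nonpos_of_nonneg_of_nonpos hε second_order]

lemma lt_sq_of_convDiff_le_of_transport_gt {Q P : Set (ℝ × E)} {F b g : ℝ × E → ℝ} (hε : 0 ≤ ε)
    (hQ : IsCompact Q) (hPQ : ∀ X ∈ P, Q ∈ 𝓝[{Y | Y.1 ≤ X.1}] X)
    (hF : ContinuousOn F Q) (hFP : ∀ X ∈ P, ContDiffAt ℝ 2 F X)
    (hb : ContinuousOn b Q) (hbP : ∀ X ∈ P, DifferentiableAt ℝ b X) (hb_pos : ∀ X ∈ Q, 0 < b X)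
    (hbn : ∀ X ∈ P, ∀ h : ℝ, b (X + h • ((0 : ℝ), n)) = b X)
    (hsub : ∀ X ∈ P, convDiff ε w n F X ≤ 2 * √(F X) * g X) (hg : ∀ X ∈ P, 0 ≤ g X)
    (hsuper : ∀ X ∈ P, g X < fderiv ℝ b X (1, w X))
    (hbdry : ∀ X ∈ Q \ P, F X < b X ^ 2) : ∀ X ∈ Q, F X < b X ^ 2 := by
  by_contra! ⟨X₀, hX₀, hviol⟩
  have hratio : ContinuousOn (fun X => F X / b X ^ 2) Q :=
    hF.div (hb.pow 2) fun X hX => (pow_pos (hb_pos X hX) 2).ne'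
  obtain ⟨X, hXQ, hXmax⟩ := hQ.exists_isMaxOn ⟨X₀, hX₀⟩ hratio
  set κ := F X / b X ^ 2 with hκ
  have hbX := hb_pos X hXQ
  have hFX : F X = κ * b X ^ 2 := by rw [hκ]; field_simp
  have one_le_κ : 1 ≤ κ := le_trans ((one_le_div (pow_pos (hb_pos X₀ hX₀) 2)).2 hviol) (hXmax hX₀)
  have hXP : X ∈ P := by
    by_contra hXP
    have := hbdry X ⟨hXQ, hXP⟩
    nlinarith [pow_pos hbX 2]
  have hmax : IsLocalMaxOn (fun Y => F Y - κ * b Y ^ 2) {Y | Y.1 ≤ X.1} X := by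
    filter_upwards [hPQ X hXP] with Y hY
    have := (div_le_iff₀ (pow_pos (hb_pos Y hY) 2)).1 (hXmax hY)
    linarith
  have hbd := hbP X hXP
  have htest := fderiv_transport_le_convDiff_of_isLocalMaxOn (w := w) (n := n) hε (hFP X hXP)
    ((hbd.pow 2).const_mul κ) (fun h => by rw [Pi.pow_apply, Pi.pow_apply, hbn X hXP]) hmax
  have hderiv : fderiv ℝ (fun Y => κ * (b ^ 2) Y) X (1, w X)
      = 2 * (κ * b X) * fderiv ℝ b X (1, w X) := by
    rw [fderiv_const_mul (hbd.pow 2), fderiv_pow 2 hbd]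
    simp only [smul_apply, smul_eq_mul, nsmul_eq_mul, Nat.cast_ofNat, Nat.reduceSub, pow_one]
    ring
  have hsqrt : √(F X) ≤ κ * b X := by
    refine Real.sqrt_le_iff.2 ⟨by positivity, ?_⟩
    rw [hFX, mul_pow]
    gcongr
    nlinarith
  have hLF : convDiff ε w n F X ≤ 2 * (κ * b X) * g X := by
    have := hg X hXP
    exact (hsub X hXP).trans (by gcongr)
  have := mul_lt_mul_of_pos_left (hsuper X hXP) (show 0 < 2 * (κ * b X) by positivity)
  linarith

end ConvectionDiffusion

section Bernstein

variable {E : Type*} [NormedAddCommGroup E] [NormedSpace ℝ E]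
  {ε : ℝ} {w : ℝ × E → E} {n : E} {v : ℝ × E} {c r H : ℝ × E → ℝ} {X : ℝ × E}

/-- Bernstein's auxiliary function `(c ∂_v r)² + (2r)²`: the good term `-8ε (∂_n r)²` produced by
`(2r)²` absorbs the error made by commuting the weight `c` with the diffusion. -/
noncomputable def bernsteinFunction (c : ℝ × E → ℝ) (v : ℝ × E) (r : ℝ × E → ℝ) (X : ℝ × E) : ℝ :=
  (c X * dirDeriv v r X) ^ 2 + (2 * r X) ^ 2

/-- The source in the differential inequality for the square root of `bernsteinFunction c v r`,
when `r` solves the convection–diffusion equation with right-hand side `H`. -/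
noncomputable def bernsteinSource (c : ℝ × E → ℝ) (v : ℝ × E) (w : ℝ × E → E) (r H : ℝ × E → ℝ)
    (X : ℝ × E) : ℝ :=
  |c X * (dirDeriv v H X - fderiv ℝ r X (0, fderiv ℝ w X v)) +
    fderiv ℝ c X (1, w X) * dirDeriv v r X| + 2 * |H X|

lemma bernsteinSource_nonneg : 0 ≤ bernsteinSource c v w r H X := by
  unfold bernsteinSource
  positivity

lemma contDiffAt_bernsteinFunction {m k : WithTop ℕ∞} (hmk : m + 1 ≤ k) (hc : ContDiffAt ℝ m c X)
    (hr : ContDiffAt ℝ k r X) : ContDiffAt ℝ m (bernsteinFunction c v r) X :=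
  ((hc.mul (contDiffAt_dirDeriv hr hmk v)).pow 2).add
    ((contDiffAt_const.mul (hr.of_le (le_self_add.trans hmk))).pow 2)

lemma continuousAt_bernsteinSource (hc : ContDiffAt ℝ 1 c X) (hw : ContDiffAt ℝ 1 w X)
    (hr : ContDiffAt ℝ 1 r X) (hH : ContDiffAt ℝ 1 H X) :
    ContinuousAt (bernsteinSource c v w r H) X := by
  have hc' : ContinuousAt (fderiv ℝ c) X := (hc.fderiv_right (m := 0) (by simp)).continuousAt
  have hw' : ContinuousAt (fderiv ℝ w) X := (hw.fderiv_right (m := 0) (by simp)).continuousAt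
  have hr' : ContinuousAt (fderiv ℝ r) X := (hr.fderiv_right (m := 0) (by simp)).continuousAt
  have hH' : ContinuousAt (fderiv ℝ H) X := (hH.fderiv_right (m := 0) (by simp)).continuousAt
  have hcommutator : ContinuousAt (fun Y => fderiv ℝ r Y (0, fderiv ℝ w Y v)) X :=
    hr'.clm_apply (continuousAt_const.prodMk (hw'.clm_apply continuousAt_const))
  have htransport : ContinuousAt (fun Y => fderiv ℝ c Y (1, w Y)) X :=
    hc'.clm_apply (continuousAt_const.prodMk hw.continuousAt)
  exact ((hc.continuousAt.mul ((hH'.clm_apply continuousAt_const).sub hcommutator)).add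
    (htransport.mul (hr'.clm_apply continuousAt_const))).abs.add
      (continuousAt_const.mul hH.continuousAt.abs)

lemma convDiff_weighted_dirDeriv (hc : ContDiffAt ℝ 2 c X) (hr : ContDiffAt ℝ 3 r X)
    (hw : DifferentiableAt ℝ w X) (heq : convDiff ε w n r =ᶠ[𝓝 X] H) :
    convDiff ε w n (fun Y => c Y * dirDeriv v r Y) X
      = c X * (dirDeriv v H X - fderiv ℝ r X (0, fderiv ℝ w X v))
        + fderiv ℝ c X (1, w X) * dirDeriv v r X
        - ε * (dirDeriv (0, n) (dirDeriv (0, n) c) X * dirDeriv v r X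
          + 2 * (dirDeriv (0, n) c X * dirDeriv (0, n) (dirDeriv v r) X)) := by
  rw [convDiff_mul hc (contDiffAt_dirDeriv hr (by norm_num) v), convDiff_dirDeriv hr hw,
    (eventuallyEq_dirDeriv heq v).eq_of_nhds]
  simp only [convDiff]
  ring

lemma convDiff_bernsteinFunction (hc : ContDiffAt ℝ 2 c X) (hr : ContDiffAt ℝ 3 r X)
    (hw : DifferentiableAt ℝ w X) (heq : convDiff ε w n r =ᶠ[𝓝 X] H) :
    convDiff ε w n (bernsteinFunction c v r) X
      = 2 * (c X * dirDeriv v r X * (c X * (dirDeriv v H X - fderiv ℝ r X (0, fderiv ℝ w X v))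
          + fderiv ℝ c X (1, w X) * dirDeriv v r X) + 2 * r X * (2 * H X))
        - 2 * ε * ((c X * dirDeriv (0, n) (dirDeriv (0, n) c) X - 3 * dirDeriv (0, n) c X ^ 2)
            * dirDeriv v r X ^ 2 + 4 * dirDeriv (0, n) r X ^ 2
          + (c X * dirDeriv (0, n) (dirDeriv v r) X
            + 2 * (dirDeriv (0, n) c X * dirDeriv v r X)) ^ 2) := by
  have hr₂ : ContDiffAt ℝ 2 r X := hr.of_le (by norm_num)
  have hq : ContDiffAt ℝ 2 (dirDeriv v r) X := contDiffAt_dirDeriv hr (by norm_num) v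
  have hp_n : dirDeriv (0, n) (fun Y => c Y * dirDeriv v r Y) X
      = c X * dirDeriv (0, n) (dirDeriv v r) X + dirDeriv v r X * dirDeriv (0, n) c X :=
    dirDeriv_mul (hc.differentiableAt two_ne_zero) (hq.differentiableAt two_ne_zero) _
  have hr_n : dirDeriv (0, n) (fun Y => 2 * r Y) X = 2 * dirDeriv (0, n) r X := by
    simp only [dirDeriv, fderiv_const_mul (hr₂.differentiableAt two_ne_zero), smul_apply,
      smul_eq_mul]
  unfold bernsteinFunction
  rw [convDiff_add ((hc.mul hq).pow 2) ((contDiffAt_const.mul hr₂).pow 2),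
    convDiff_sq (hc.mul hq), convDiff_sq (contDiffAt_const.mul hr₂),
    convDiff_weighted_dirDeriv hc hr hw heq, convDiff_const_mul 2 hr₂, heq.eq_of_nhds, hp_n, hr_n]
  ring

lemma convDiff_bernsteinFunction_le (hε : 0 ≤ ε) (hc : ContDiffAt ℝ 2 c X)
    (hr : ContDiffAt ℝ 3 r X) (hw : DifferentiableAt ℝ w X) (heq : convDiff ε w n r =ᶠ[𝓝 X] H)
    (hweight : 0 ≤ (c X * dirDeriv (0, n) (dirDeriv (0, n) c) X - 3 * dirDeriv (0, n) c X ^ 2)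
      * dirDeriv v r X ^ 2 + 4 * dirDeriv (0, n) r X ^ 2) :
    convDiff ε w n (bernsteinFunction c v r) X
      ≤ 2 * √(bernsteinFunction c v r X) * bernsteinSource c v w r H X := by
  set p := c X * dirDeriv v r X
  set S := c X * (dirDeriv v H X - fderiv ℝ r X (0, fderiv ℝ w X v))
    + fderiv ℝ c X (1, w X) * dirDeriv v r X
  have hpF : |p| ≤ √(bernsteinFunction c v r X) :=
    Real.abs_le_sqrt (le_add_of_nonneg_right (sq_nonneg _))
  have hrF : |2 * r X| ≤ √(bernsteinFunction c v r X) :=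
    Real.abs_le_sqrt (le_add_of_nonneg_left (sq_nonneg _))
  have hpS : p * S ≤ √(bernsteinFunction c v r X) * |S| :=
    (le_abs_self _).trans (by rw [abs_mul]; gcongr)
  have hrH : 2 * r X * (2 * H X) ≤ √(bernsteinFunction c v r X) * (2 * |H X|) :=
    (le_abs_self _).trans (by rw [abs_mul, abs_mul 2 (H X), abs_two]; gcongr)
  rw [convDiff_bernsteinFunction hc hr hw heq, bernsteinSource]
  nlinarith [mul_nonneg hε (add_nonneg hweight (sq_nonneg (c X * dirDeriv (0, n) (dirDeriv v r) X
    + 2 * (dirDeriv (0, n) c X * dirDeriv v r X))))]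

end Bernstein

section LateralBarrier

variable {ι : Type*} [Fintype ι] {B t₀ : ℝ} {η : ι → ℝ}

/-- A smooth supersolution of `∂_t + w·∇` for every tangential velocity bounded by `B`. It vanishes
on the vertical line through `η` at time `t₀` and is at least `1` outside the ball of radius
`B t₀ + 1` around `η`, so that it expresses finite speed of propagation. -/
noncomputable def lateralBarrier (B t₀ : ℝ) (η : ι → ℝ) (X : ℝ × ((ι → ℝ) × ℝ)) : ℝ :=
  ∑ j, (Real.smoothTransition (X.2.1 j - η j + B * (X.1 - t₀))
    + Real.smoothTransition (η j - X.2.1 j + B * (X.1 - t₀)))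

lemma differentiable_lateralBarrier : Differentiable ℝ (lateralBarrier B t₀ η) := by
  have hσ : Differentiable ℝ Real.smoothTransition :=
    (Real.smoothTransition.contDiff (n := 1)).differentiable one_ne_zero
  unfold lateralBarrier
  fun_prop

lemma lateralBarrier_nonneg (X : ℝ × ((ι → ℝ) × ℝ)) : 0 ≤ lateralBarrier B t₀ η X :=
  Finset.sum_nonneg fun _ _ =>
    add_nonneg (Real.smoothTransition.nonneg _) (Real.smoothTransition.nonneg _)

lemma lateralBarrier_center (z : ℝ) : lateralBarrier B t₀ η (t₀, (η, z)) = 0 := by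
  simp [lateralBarrier, Real.smoothTransition.zero]

lemma lateralBarrier_add_smul_vertical (X : ℝ × ((ι → ℝ) × ℝ)) (h : ℝ) :
    lateralBarrier B t₀ η (X + h • ((0 : ℝ), ((0 : ι → ℝ), (1 : ℝ))))
      = lateralBarrier B t₀ η X := by
  simp [lateralBarrier]

lemma one_le_lateralBarrier (hB : 0 ≤ B) (ht₀ : 0 ≤ t₀) {X : ℝ × ((ι → ℝ) × ℝ)} (hX : 0 ≤ X.1)
    (hdist : B * t₀ + 1 ≤ dist X.2.1 η) : 1 ≤ lateralBarrier B t₀ η X := by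
  have hfar : ∃ j, B * t₀ + 1 ≤ |X.2.1 j - η j| := by
    by_contra! hnear
    exact hdist.not_gt ((dist_pi_lt_iff (by positivity)).2 fun j => by
      simpa [Real.dist_eq] using hnear j)
  obtain ⟨j, hj⟩ := hfar
  have hBX := mul_nonneg hB hX
  have hσ₁ := Real.smoothTransition.nonneg (X.2.1 j - η j + B * (X.1 - t₀))
  have hσ₂ := Real.smoothTransition.nonneg (η j - X.2.1 j + B * (X.1 - t₀))
  have hterm : 1 ≤ Real.smoothTransition (X.2.1 j - η j + B * (X.1 - t₀))
      + Real.smoothTransition (η j - X.2.1 j + B * (X.1 - t₀)) := by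
    rcases le_abs.1 hj with hright | hleft
    · have := Real.smoothTransition.one_of_one_le
        (show 1 ≤ X.2.1 j - η j + B * (X.1 - t₀) by linarith)
      linarith
    · have := Real.smoothTransition.one_of_one_le
        (show 1 ≤ η j - X.2.1 j + B * (X.1 - t₀) by linarith)
      linarith
  exact hterm.trans (Finset.single_le_sum (f := fun j =>
    Real.smoothTransition (X.2.1 j - η j + B * (X.1 - t₀))
      + Real.smoothTransition (η j - X.2.1 j + B * (X.1 - t₀)))
    (fun _ _ => add_nonneg (Real.smoothTransition.nonneg _) (Real.smoothTransition.nonneg _))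
    (Finset.mem_univ j))

lemma transport_lateralBarrier_nonneg {u : (ι → ℝ) × ℝ} (hu : ∀ j, |u.1 j| ≤ B)
    (X : ℝ × ((ι → ℝ) × ℝ)) : 0 ≤ fderiv ℝ (lateralBarrier B t₀ η) X (1, u) := by
  have hmono : Monotone fun h : ℝ => lateralBarrier B t₀ η (X + h • ((1 : ℝ), u)) := by
    intro h k hhk
    refine Finset.sum_le_sum fun j _ => add_le_add ?_ ?_ <;>
      refine Real.smoothTransition.monotone ?_ <;>
      simp only [Prod.fst_add, Prod.snd_add, Prod.smul_fst, Prod.smul_snd, Pi.add_apply,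
        Pi.smul_apply, smul_eq_mul, mul_one] <;>
      nlinarith [abs_le.1 (hu j)]
  have hd := hasDerivAt_comp_line (X := X) (v := ((1 : ℝ), u)) (h := 0)
    (differentiable_lateralBarrier (B := B) (t₀ := t₀) (η := η) _)
  have hnonneg := hmono.deriv_nonneg (x := 0)
  rw [hd.deriv] at hnonneg
  simpa [dirDeriv] using hnonneg

lemma deriv_le_transport_add_lateralBarrier {a : ℝ → ℝ} {N : ℝ} {u : (ι → ℝ) × ℝ}
    {X : ℝ × ((ι → ℝ) × ℝ)} (ha : DifferentiableAt ℝ a X.1) (hN : 0 ≤ N)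
    (hu : ∀ j, |u.1 j| ≤ B) :
    deriv a X.1 ≤ fderiv ℝ (fun Y => a Y.1 + N * lateralBarrier B t₀ η Y) X (1, u) := by
  have h := (ha.hasDerivAt.hasFDerivAt.comp X hasFDerivAt_fst).add
    ((differentiable_lateralBarrier (B := B) (t₀ := t₀) (η := η) X).hasFDerivAt.const_mul N)
  have hbarrier := mul_nonneg hN (transport_lateralBarrier_nonneg (t₀ := t₀) (η := η) hu X)
  rw [show fderiv ℝ (fun Y => a Y.1 + N * lateralBarrier B t₀ η Y) X = _ from h.fderiv]
  simpa using hbarrier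

end LateralBarrier

section Strip

open Metric

variable {ι : Type*} [Fintype ι] {ε B K t₀ : ℝ} {η : ι → ℝ}
  {w : ℝ × ((ι → ℝ) × ℝ) → (ι → ℝ) × ℝ} {F : ℝ × ((ι → ℝ) × ℝ) → ℝ}

/-- The space-time cylinder `[0, t₀] × B̄(η, R) × [-K, 0]`. -/
def closedCylinder (t₀ R K : ℝ) (η : ι → ℝ) : Set (ℝ × ((ι → ℝ) × ℝ)) :=
  Icc 0 t₀ ×ˢ (closedBall η R ×ˢ Icc (-K) 0)

/-- The parabolic interior `(0, t₀] × B(η, R) × (-K, 0)` of `closedCylinder t₀ R K η`. -/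
def parabolicInterior (t₀ R K : ℝ) (η : ι → ℝ) : Set (ℝ × ((ι → ℝ) × ℝ)) :=
  Ioc 0 t₀ ×ˢ (ball η R ×ˢ Ioo (-K) 0)

lemma isCompact_closedCylinder (t₀ R K : ℝ) (η : ι → ℝ) :
    IsCompact (closedCylinder t₀ R K η) :=
  isCompact_Icc.prod ((isCompact_closedBall _ _).prod isCompact_Icc)

lemma closedCylinder_mem_nhdsWithin_past {R : ℝ} {X : ℝ × ((ι → ℝ) × ℝ)}
    (hX : X ∈ parabolicInterior t₀ R K η) :
    closedCylinder t₀ R K η ∈ 𝓝[{Y | Y.1 ≤ X.1}] X := by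
  obtain ⟨hXt, hXy, hXz⟩ := hX
  have hopen : IsOpen (Ioi (0 : ℝ) ×ˢ (ball η R ×ˢ Ioo (-K) 0)) :=
    isOpen_Ioi.prod (isOpen_ball.prod isOpen_Ioo)
  filter_upwards [self_mem_nhdsWithin,
    mem_nhdsWithin_of_mem_nhds (hopen.mem_nhds ⟨hXt.1, hXy, hXz⟩)] with Y hYt hY
  exact ⟨⟨hY.1.le, hYt.trans hXt.2⟩, ball_subset_closedBall hY.2.1, Ioo_subset_Icc_self hY.2.2⟩

lemma boundary_cases_of_mem_closedCylinder {R : ℝ} {X : ℝ × ((ι → ℝ) × ℝ)}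
    (hX : X ∈ closedCylinder t₀ R K η) (hXP : X ∉ parabolicInterior t₀ R K η) :
    R ≤ dist X.2.1 η ∨ X.1 = 0 ∨ X.2.2 = -K ∨ X.2.2 = 0 := by
  obtain ⟨⟨h0, ht⟩, -, hK, hz⟩ := hX
  by_contra! ⟨hy, h0', hK', hz'⟩
  exact hXP ⟨⟨h0.lt_of_ne' h0', ht⟩, hy, hK.lt_of_ne' hK', hz.lt_of_ne hz'⟩

lemma lt_sq_center_of_convDiff_le {a g : ℝ → ℝ} (hε : 0 ≤ ε) (hB : 0 ≤ B) (ht₀ : 0 ≤ t₀)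
    (hF : ContinuousOn F (closedCylinder t₀ (B * t₀ + 1) K η))
    (hFP : ∀ X ∈ parabolicInterior t₀ (B * t₀ + 1) K η, ContDiffAt ℝ 2 F X)
    (hw : ∀ X ∈ parabolicInterior t₀ (B * t₀ + 1) K η, ∀ j, |(w X).1 j| ≤ B)
    (hsub : ∀ X ∈ parabolicInterior t₀ (B * t₀ + 1) K η,
      convDiff ε w (0, 1) F X ≤ 2 * √(F X) * g X.1)
    (ha : Differentiable ℝ a) (ha_pos : ∀ t ∈ Icc 0 t₀, 0 < a t)
    (hg : ∀ t ∈ Ioc 0 t₀, 0 ≤ g t) (hga : ∀ t ∈ Ioc 0 t₀, g t < deriv a t)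
    (hbdry : ∀ X ∈ closedCylinder t₀ (B * t₀ + 1) K η,
      X.1 = 0 ∨ X.2.2 = -K ∨ X.2.2 = 0 → F X < a X.1 ^ 2)
    {z : ℝ} (hz : z ∈ Icc (-K) 0) : F (t₀, (η, z)) < a t₀ ^ 2 := by
  obtain ⟨M, hM⟩ := (isCompact_closedCylinder t₀ (B * t₀ + 1) K η).bddAbove_image hF
  have hFM : ∀ X ∈ closedCylinder t₀ (B * t₀ + 1) K η, F X < (|M| + 1) ^ 2 := fun X hX => by
    have : F X ≤ M := hM (mem_image_of_mem F hX)
    nlinarith [le_abs_self M, abs_nonneg M]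
  set b : ℝ × ((ι → ℝ) × ℝ) → ℝ := fun X => a X.1 + (|M| + 1) * lateralBarrier B t₀ η X with hb
  have hlat (X) : 0 ≤ (|M| + 1) * lateralBarrier B t₀ η X :=
    mul_nonneg (by positivity) (lateralBarrier_nonneg X)
  have hb_diff : Differentiable ℝ b :=
    (ha.comp differentiable_fst).add (differentiable_lateralBarrier.const_mul _)
  have hb_vertical (X) (h : ℝ) : b (X + h • (0, (0, 1))) = b X := by
    simp only [hb, lateralBarrier_add_smul_vertical, Prod.fst_add, Prod.smul_fst, smul_zero,
      add_zero]
  have hcenter : (t₀, (η, z)) ∈ closedCylinder t₀ (B * t₀ + 1) K η :=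
    ⟨right_mem_Icc.2 ht₀, mem_closedBall_self (by positivity), hz⟩
  have key := lt_sq_of_convDiff_le_of_transport_gt (w := w) (g := fun X => g X.1) (b := b) hε
    (isCompact_closedCylinder t₀ (B * t₀ + 1) K η)
    (fun X hX => closedCylinder_mem_nhdsWithin_past hX) hF hFP hb_diff.continuous.continuousOn
    (fun X _ => hb_diff X) (fun X hX => add_pos_of_pos_of_nonneg (ha_pos _ hX.1) (hlat X))
    (fun X _ h => hb_vertical X h) hsub (fun X hX => hg _ hX.1) ?_ ?_ _ hcenter
  · simpa [hb, lateralBarrier_center] using key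
  · exact fun X hX => (hga _ hX.1).trans_le
      (deriv_le_transport_add_lateralBarrier (ha X.1) (by positivity) (hw X hX))
  · rintro X ⟨hXQ, hXP⟩
    have haX := ha_pos _ hXQ.1
    rcases boundary_cases_of_mem_closedCylinder hXQ hXP with hside | hrest
    · have := one_le_lateralBarrier hB ht₀ hXQ.1.1 hside
      exact (hFM X hXQ).trans_le (pow_le_pow_left₀ (by positivity) (by nlinarith [abs_nonneg M]) 2)
    · exact (hbdry X hXQ hrest).trans_le (by gcongr; exact le_add_of_nonneg_right (hlat X))

lemma sqrt_center_le_add_integral {g : ℝ → ℝ} {m : ℝ} (hε : 0 ≤ ε) (hB : 0 ≤ B) (ht₀ : 0 ≤ t₀)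
    (hm : 0 ≤ m) (hg : Continuous g) (hg0 : ∀ t, 0 ≤ g t)
    (hF : ContinuousOn F (closedCylinder t₀ (B * t₀ + 1) K η))
    (hFP : ∀ X ∈ parabolicInterior t₀ (B * t₀ + 1) K η, ContDiffAt ℝ 2 F X)
    (hw : ∀ X ∈ parabolicInterior t₀ (B * t₀ + 1) K η, ∀ j, |(w X).1 j| ≤ B)
    (hsub : ∀ X ∈ parabolicInterior t₀ (B * t₀ + 1) K η,
      convDiff ε w (0, 1) F X ≤ 2 * √(F X) * g X.1)
    (hbdry : ∀ X ∈ closedCylinder t₀ (B * t₀ + 1) K η,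
      X.1 = 0 ∨ X.2.2 = -K ∨ X.2.2 = 0 → F X ≤ m ^ 2)
    {z : ℝ} (hz : z ∈ Icc (-K) 0) :
    √(F (t₀, (η, z))) ≤ m + ∫ s in (0 : ℝ)..t₀, g s := by
  refine le_of_forall_pos_le_add fun θ hθ => ?_
  set δ := θ / (1 + t₀) with hδ
  have hδ_pos : 0 < δ := by positivity
  set a : ℝ → ℝ := fun t => m + δ + ((∫ s in (0 : ℝ)..t, g s) + δ * t) with ha
  have ha_deriv (t) : HasDerivAt a (g t + δ) t := by
    simpa only [mul_one] using! ((hg.integral_hasStrictDerivAt 0 t).hasDerivAt.add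
      ((hasDerivAt_id t).const_mul δ)).const_add (m + δ)
  have ha_ge : ∀ t, 0 ≤ t → m + δ ≤ a t := fun t ht =>
    le_add_of_nonneg_right (add_nonneg (intervalIntegral.integral_nonneg ht fun s _ => hg0 s)
      (by positivity))
  have key := lt_sq_center_of_convDiff_le (a := a) hε hB ht₀ hF hFP hw hsub
    (fun t => (ha_deriv t).differentiableAt) (fun t ht => by linarith [ha_ge t ht.1])
    (fun t _ => hg0 t) (fun t _ => by rw [(ha_deriv t).deriv]; linarith)
    (fun X hX hX' => (hbdry X hX hX').trans_lt (by gcongr; linarith [ha_ge X.1 hX.1.1])) hz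
  have ha_t₀ : a t₀ = m + (∫ s in (0 : ℝ)..t₀, g s) + θ := by
    rw [ha, hδ]
    field_simp
    ring
  exact ha_t₀ ▸ Real.sqrt_le_iff.2 ⟨by linarith [ha_ge t₀ ht₀], key.le⟩

lemma exists_continuous_majorant_on_compact {Y : Type*} [TopologicalSpace Y] {D : Set (Y × ℝ)}
    (hD : IsCompact D) (hD_neg : ∀ x ∈ D, x.2 ≤ 0) {G : ℝ × (Y × ℝ) → ℝ}
    (hG : ContinuousOn G {X | X.2.2 ≤ 0}) (hG_nonneg : ∀ X, 0 ≤ G X) :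
    ∃ g : ℝ → ℝ, Continuous g ∧ (∀ s, 0 ≤ g s) ∧ (∀ s, ∀ x ∈ D, G (s, x) ≤ g s) ∧
      ∀ s, ∀ M : ℝ≥0∞, (∀ x : Y × ℝ, x.2 < 0 → ENNReal.ofReal (G (s, x)) ≤ M) →
        ENNReal.ofReal (g s) ≤ M := by
  -- `continuous_sSup` needs a globally continuous function, whence the truncation of `z` at `0`.
  set Gc : ℝ → Y × ℝ → ℝ := fun s x => G (s, (x.1, min x.2 0)) with hGc
  have hGc_cont : Continuous fun p : ℝ × (Y × ℝ) => Gc p.1 p.2 :=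
    hG.comp_continuous (by fun_prop) fun p => min_le_right p.2.2 0
  have hGc_slice (s) : Continuous (Gc s) := hGc_cont.comp (by fun_prop : Continuous (Prod.mk s))
  have hGc_eq (s) {x : Y × ℝ} (hx : x.2 ≤ 0) : Gc s x = G (s, x) := by
    simp only [hGc, min_eq_left hx]
  refine ⟨fun s => sSup (Gc s '' D), hD.continuous_sSup hGc_cont, fun s => ?_, fun s x hx => ?_,
    fun s M hM => ?_⟩
  · exact Real.sSup_nonneg (forall_mem_image.2 fun x _ => hG_nonneg _)
  · exact hGc_eq s (hD_neg x hx) ▸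
      le_csSup (hD.image (hGc_slice s)).bddAbove (mem_image_of_mem _ hx)
  · rcases eq_or_ne M ⊤ with rfl | hM_top
    · exact le_top
    refine ENNReal.ofReal_le_of_le_toReal (Real.sSup_le (forall_mem_image.2 fun x hx => ?_)
      ENNReal.toReal_nonneg)
    have hx_closure : x ∈ closure (univ ×ˢ Iio (0 : ℝ) : Set (Y × ℝ)) := by
      rw [closure_prod_eq, closure_univ, closure_Iio]
      exact ⟨trivial, hD_neg x hx⟩
    refine le_on_closure (fun x' hx' => ?_) (hGc_slice s).continuousOn continuousOn_const hx_closure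
    rw [hGc_eq s (le_of_lt hx'.2)]
    exact (ENNReal.ofReal_le_iff_le_toReal hM_top).1 (hM x' hx'.2)

lemma ofReal_integral_le_setLIntegral {g : ℝ → ℝ} {J : ℝ → ℝ≥0∞} {t : ℝ} (ht : 0 ≤ t)
    (hg : Continuous g) (hg_nonneg : ∀ s, 0 ≤ g s)
    (hgJ : ∀ s ∈ Icc 0 t, ENNReal.ofReal (g s) ≤ J s) :
    ENNReal.ofReal (∫ s in (0 : ℝ)..t, g s) ≤ ∫⁻ s in Icc 0 t, J s := by
  rw [intervalIntegral.integral_of_le ht, ofReal_integral_eq_lintegral_ofReal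
    (hg.intervalIntegrable 0 t).1 (.of_forall hg_nonneg)]
  calc ∫⁻ s in Ioc 0 t, ENNReal.ofReal (g s)
      ≤ ∫⁻ s in Icc 0 t, ENNReal.ofReal (g s) := lintegral_mono_set Ioc_subset_Icc_self
    _ ≤ ∫⁻ s in Icc 0 t, J s := setLIntegral_mono' measurableSet_Icc hgJ

variable {T m : ℝ} {G : ℝ × ((ι → ℝ) × ℝ) → ℝ} {J : ℝ → ℝ≥0∞}

lemma ofReal_sqrt_le_add_lintegral_of_lt (hε : 0 ≤ ε) (hB : 0 ≤ B) (hm : 0 ≤ m)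
    (hF : ContinuousOn F {X | X.2.2 ≤ 0})
    (hF_smooth : ∀ X : ℝ × ((ι → ℝ) × ℝ), X.2.2 < 0 → ContDiffAt ℝ 2 F X)
    (hG : ContinuousOn G {X | X.2.2 ≤ 0}) (hG_nonneg : ∀ X, 0 ≤ G X)
    (hw : ∀ X : ℝ × ((ι → ℝ) × ℝ), X.1 ∈ Ioo 0 T → X.2.2 < 0 → ∀ j, |(w X).1 j| ≤ B)
    (hsub : ∀ X : ℝ × ((ι → ℝ) × ℝ), X.1 ∈ Ioo 0 T → X.2.2 < 0 →
      convDiff ε w (0, 1) F X ≤ 2 * √(F X) * G X)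
    (hbdry : ∀ X : ℝ × ((ι → ℝ) × ℝ), X.1 ∈ Icc 0 T → X.2.2 ≤ 0 →
      X.1 = 0 ∨ X.2.2 < -K ∨ X.2.2 = 0 → F X ≤ m ^ 2)
    (hGJ : ∀ s ∈ Icc 0 T, ∀ x : (ι → ℝ) × ℝ, x.2 < 0 → ENNReal.ofReal (G (s, x)) ≤ J s)
    {t : ℝ} (ht : t ∈ Ico 0 T) {x : (ι → ℝ) × ℝ} (hx : x.2 ≤ 0) :
    ENNReal.ofReal √(F (t, x)) ≤ ENNReal.ofReal m + ∫⁻ s in Icc 0 t, J s := by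
  set K' := |K| + |x.2| + 1
  have hx_mem : x.2 ∈ Icc (-K') 0 := ⟨by linarith [neg_abs_le x.2, abs_nonneg K], hx⟩
  obtain ⟨g, hg, hg_nonneg, hGg, hgJ⟩ := exists_continuous_majorant_on_compact
    ((isCompact_closedBall x.1 (B * t + 1)).prod (isCompact_Icc (a := -K') (b := 0)))
    (fun x' hx' => hx'.2.2) hG hG_nonneg
  have hQ {X} (hX : X ∈ closedCylinder t (B * t + 1) K' x.1) : X.1 ∈ Icc 0 T ∧ X.2.2 ≤ 0 :=
    ⟨⟨hX.1.1, hX.1.2.trans ht.2.le⟩, hX.2.2.2⟩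
  have hP {X} (hX : X ∈ parabolicInterior t (B * t + 1) K' x.1) : X.1 ∈ Ioo 0 T ∧ X.2.2 < 0 :=
    ⟨⟨hX.1.1, hX.1.2.trans_lt ht.2⟩, hX.2.2.2⟩
  have hsub_g (X) (hX : X ∈ parabolicInterior t (B * t + 1) K' x.1) :
      convDiff ε w (0, 1) F X ≤ 2 * √(F X) * g X.1 := by
    refine (hsub X (hP hX).1 (hP hX).2).trans ?_
    gcongr
    exact hGg X.1 X.2 ⟨ball_subset_closedBall hX.2.1, Ioo_subset_Icc_self hX.2.2⟩
  have hbdry_K' (X) (hX : X ∈ closedCylinder t (B * t + 1) K' x.1)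
      (hX' : X.1 = 0 ∨ X.2.2 = -K' ∨ X.2.2 = 0) : F X ≤ m ^ 2 :=
    hbdry X (hQ hX).1 (hQ hX).2 (hX'.imp_right (.imp_left fun h => by
      linarith [le_abs_self K, abs_nonneg x.2]))
  have hsqrt := sqrt_center_le_add_integral hε hB ht.1 hm hg hg_nonneg
    (hF.mono fun X hX => (hQ hX).2) (fun X hX => hF_smooth X (hP hX).2)
    (fun X hX => hw X (hP hX).1 (hP hX).2) hsub_g hbdry_K' hx_mem
  calc ENNReal.ofReal √(F (t, x))
      ≤ ENNReal.ofReal m + ENNReal.ofReal (∫ s in (0 : ℝ)..t, g s) :=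
        (ENNReal.ofReal_le_ofReal hsqrt).trans ENNReal.ofReal_add_le
    _ ≤ ENNReal.ofReal m + ∫⁻ s in Icc 0 t, J s := by
        gcongr
        exact ofReal_integral_le_setLIntegral ht.1 hg hg_nonneg fun s hs =>
          hgJ s (J s) (hGJ s ⟨hs.1, hs.2.trans ht.2.le⟩)

theorem ofReal_sqrt_le_add_lintegral (hε : 0 ≤ ε) (hB : 0 ≤ B) (hm : 0 ≤ m)
    (hF : ContinuousOn F {X | X.2.2 ≤ 0})
    (hF_smooth : ∀ X : ℝ × ((ι → ℝ) × ℝ), X.2.2 < 0 → ContDiffAt ℝ 2 F X)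
    (hG : ContinuousOn G {X | X.2.2 ≤ 0}) (hG_nonneg : ∀ X, 0 ≤ G X)
    (hw : ∀ X : ℝ × ((ι → ℝ) × ℝ), X.1 ∈ Ioo 0 T → X.2.2 < 0 → ∀ j, |(w X).1 j| ≤ B)
    (hsub : ∀ X : ℝ × ((ι → ℝ) × ℝ), X.1 ∈ Ioo 0 T → X.2.2 < 0 →
      convDiff ε w (0, 1) F X ≤ 2 * √(F X) * G X)
    (hbdry : ∀ X : ℝ × ((ι → ℝ) × ℝ), X.1 ∈ Icc 0 T → X.2.2 ≤ 0 →
      X.1 = 0 ∨ X.2.2 < -K ∨ X.2.2 = 0 → F X ≤ m ^ 2)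
    (hGJ : ∀ s ∈ Icc 0 T, ∀ x : (ι → ℝ) × ℝ, x.2 < 0 → ENNReal.ofReal (G (s, x)) ≤ J s)
    {t : ℝ} (ht : t ∈ Icc 0 T) {x : (ι → ℝ) × ℝ} (hx : x.2 ≤ 0) :
    ENNReal.ofReal √(F (t, x)) ≤ ENNReal.ofReal m + ∫⁻ s in Icc 0 t, J s := by
  have before {s : ℝ} (hs : s ∈ Ico 0 T) :=
    ofReal_sqrt_le_add_lintegral_of_lt hε hB hm hF hF_smooth hG hG_nonneg hw hsub hbdry hGJ hs hx
  rcases ht.2.lt_or_eq with htT | rfl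
  · exact before ⟨ht.1, htT⟩
  rcases ht.1.eq_or_lt with rfl | ht_pos
  · have hsqrt := Real.sqrt_le_iff.2 ⟨hm, hbdry (0, x) ht hx (.inl rfl)⟩
    exact (ENNReal.ofReal_le_ofReal hsqrt).trans le_self_add
  have hcont : Continuous fun s => ENNReal.ofReal √(F (s, x)) :=
    ENNReal.continuous_ofReal.comp
      (hF.comp_continuous (by fun_prop : Continuous fun s => (s, x)) fun _ => hx).sqrt
  refine le_of_tendsto (hcont.continuousWithinAt (s := Iio t) (x := t)) ?_
  filter_upwards [Ioo_mem_nhdsLT ht_pos] with s hs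
  refine (before ⟨hs.1.le, hs.2⟩).trans ?_
  gcongr
  exact hs.2.le

end Strip

section ConormalFields

/-- The coefficient of the conormal field `Z_i`: `1` for the tangential fields and `z / (1 - z)`
for the last one. -/
noncomputable def conormalWeight (i : Fin 3) : ℝ → ℝ :=
  Fin.lastCases (motive := fun _ => ℝ → ℝ) (fun z => z / (1 - z)) (fun _ _ => 1) i

/-- The coordinate direction of the conormal field `Z_i`. -/
def conormalDir (i : Fin 3) : (Fin 2 → ℝ) × ℝ :=
  Fin.lastCases (motive := fun _ => (Fin 2 → ℝ) × ℝ) (0, 1) (fun j => (Pi.single j 1, 0)) i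

lemma conormalWeight_castSucc (j : Fin 2) : conormalWeight j.castSucc = fun _ => 1 :=
  Fin.lastCases_castSucc ..

lemma conormalWeight_last : conormalWeight (Fin.last 2) = fun z => z / (1 - z) :=
  Fin.lastCases_last ..

lemma conormalDir_castSucc (j : Fin 2) : conormalDir j.castSucc = (Pi.single j 1, 0) :=
  Fin.lastCases_castSucc ..

lemma conormalDir_last : conormalDir (Fin.last 2) = (0, 1) :=
  Fin.lastCases_last ..

lemma zop_castSucc (j : Fin 2) (g : (Fin 2 → ℝ) × ℝ → ℝ) :
    Zop j.castSucc g = dirDeriv (Pi.single j 1, 0) g := by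
  fin_cases j <;> rfl

lemma zop_last (g : (Fin 2 → ℝ) × ℝ → ℝ) :
    Zop (Fin.last 2) g = fun x => x.2 / (1 - x.2) * dzD g x := rfl

lemma zop_apply (i : Fin 3) (g : (Fin 2 → ℝ) × ℝ → ℝ) (x : (Fin 2 → ℝ) × ℝ) :
    Zop i g x = conormalWeight i x.2 * fderiv ℝ g x (conormalDir i) := by
  cases i using Fin.lastCases with
  | last => rw [conormalWeight_last, conormalDir_last]; rfl
  | cast j => rw [conormalWeight_castSucc, conormalDir_castSucc, zop_castSucc, dirDeriv, one_mul]

lemma contDiffAt_conormalWeight {m : WithTop ℕ∞} (i : Fin 3) {z : ℝ} (hz : z < 1) :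
    ContDiffAt ℝ m (conormalWeight i) z := by
  cases i using Fin.lastCases with
  | last =>
    rw [conormalWeight_last]
    exact contDiffAt_id.div (contDiffAt_const.sub contDiffAt_id) (sub_pos.2 hz).ne'
  | cast j => rw [conormalWeight_castSucc]; exact contDiffAt_const

lemma hasDerivAt_conormalWeight_last {z : ℝ} (hz : z < 1) :
    HasDerivAt (conormalWeight (Fin.last 2)) (1 / (1 - z) ^ 2) z := by
  have hz' : 1 - z ≠ 0 := (sub_pos.2 hz).ne'
  rw [conormalWeight_last]
  refine ((hasDerivAt_id z).div ((hasDerivAt_id z).const_sub 1) hz').congr_deriv ?_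
  simp only [id]
  ring

lemma deriv_deriv_conormalWeight_last {z : ℝ} (hz : z < 1) :
    deriv (deriv (conormalWeight (Fin.last 2))) z = 2 / (1 - z) ^ 3 := by
  have hz' : 1 - z ≠ 0 := (sub_pos.2 hz).ne'
  have first_order : deriv (conormalWeight (Fin.last 2)) =ᶠ[𝓝 z] fun z => 1 / (1 - z) ^ 2 :=
    (eventually_lt_nhds hz).mono fun y hy => (hasDerivAt_conormalWeight_last hy).deriv
  have second_order : HasDerivAt (fun z : ℝ => 1 / (1 - z) ^ 2) (2 / (1 - z) ^ 3) z := by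
    refine ((hasDerivAt_const z (1 : ℝ)).div (((hasDerivAt_id z).const_sub 1).pow 2)
      (pow_ne_zero 2 hz')).congr_deriv ?_
    simp only [id, Pi.pow_apply]
    field_simp
    ring
  rw [first_order.deriv_eq, second_order.deriv]

lemma neg_four_le_conormalWeight_last {z : ℝ} (hz : z ≤ 0) :
    -4 ≤ conormalWeight (Fin.last 2) z * deriv (deriv (conormalWeight (Fin.last 2))) z
      - 3 * deriv (conormalWeight (Fin.last 2)) z ^ 2 := by
  have hz' : z < 1 := by linarith
  have h1z : 0 < 1 - z := by linarith
  rw [deriv_deriv_conormalWeight_last hz', (hasDerivAt_conormalWeight_last hz').deriv,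
    conormalWeight_last]
  have hsimp : z / (1 - z) * (2 / (1 - z) ^ 3) - 3 * (1 / (1 - z) ^ 2) ^ 2
      = (2 * z - 3) / (1 - z) ^ 4 := by
    field_simp
  rw [hsimp, le_div_iff₀ (by positivity)]
  have bernoulli : 1 + 4 * -z ≤ (1 - z) ^ 4 := by
    simpa [sub_eq_add_neg] using one_add_mul_le_pow (show -2 ≤ -z by linarith) 4
  linarith

lemma fderiv_comp_height {Y : Type*} [NormedAddCommGroup Y] [NormedSpace ℝ Y] {c : ℝ → ℝ}
    {X : ℝ × (Y × ℝ)} (hc : DifferentiableAt ℝ c X.2.2) (V : ℝ × (Y × ℝ)) :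
    fderiv ℝ (fun X : ℝ × (Y × ℝ) => c X.2.2) X V = deriv c X.2.2 * V.2.2 := by
  have hheight : HasFDerivAt (fun X : ℝ × (Y × ℝ) => X.2.2)
      ((ContinuousLinearMap.snd ℝ Y ℝ).comp (ContinuousLinearMap.snd ℝ ℝ (Y × ℝ))) X :=
    ((ContinuousLinearMap.snd ℝ Y ℝ).comp (ContinuousLinearMap.snd ℝ ℝ (Y × ℝ))).hasFDerivAt
  rw [show fderiv ℝ (fun X : ℝ × (Y × ℝ) => c X.2.2) X = _ from
    (hc.hasDerivAt.comp_hasFDerivAt X hheight).fderiv]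
  simp

lemma dirDeriv_dirDeriv_comp_height {Y : Type*} [NormedAddCommGroup Y] [NormedSpace ℝ Y]
    {c : ℝ → ℝ} {X : ℝ × (Y × ℝ)} (hc : ContDiffAt ℝ 2 c X.2.2) :
    dirDeriv (0, (0, 1)) (dirDeriv (0, (0, 1)) fun X : ℝ × (Y × ℝ) => c X.2.2) X
      = deriv (deriv c) X.2.2 := by
  have first_order : dirDeriv (0, (0, 1)) (fun X : ℝ × (Y × ℝ) => c X.2.2)
      =ᶠ[𝓝 X] fun X => deriv c X.2.2 := by
    have hheight : Tendsto (fun X : ℝ × (Y × ℝ) => X.2.2) (𝓝 X) (𝓝 X.2.2) :=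
      (by fun_prop : Continuous fun X : ℝ × (Y × ℝ) => X.2.2).tendsto X
    filter_upwards [hheight.eventually (eventually_differentiableAt hc one_le_two)] with Z hZ
    rw [dirDeriv, fderiv_comp_height hZ, mul_one]
  have hc' : DifferentiableAt ℝ (deriv c) X.2.2 := by
    have h := contDiffAt_dirDeriv (m := 1) hc one_add_one_eq_two.le 1
    exact h.differentiableAt one_ne_zero
  rw [(eventuallyEq_dirDeriv first_order _).eq_of_nhds, dirDeriv, fderiv_comp_height hc', mul_one]

lemma conormalWeight_bernstein_condition (i : Fin 3) {r : ℝ × ((Fin 2 → ℝ) × ℝ) → ℝ}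
    {X : ℝ × ((Fin 2 → ℝ) × ℝ)} (hX : X.2.2 ≤ 0) :
    0 ≤ (conormalWeight i X.2.2
          * dirDeriv (0, (0, 1)) (dirDeriv (0, (0, 1)) fun Y => conormalWeight i Y.2.2) X
        - 3 * dirDeriv (0, (0, 1)) (fun Y => conormalWeight i Y.2.2) X ^ 2)
      * dirDeriv (0, conormalDir i) r X ^ 2 + 4 * dirDeriv (0, (0, 1)) r X ^ 2 := by
  have hz : X.2.2 < 1 := by linarith
  have first_order : dirDeriv (0, (0, 1)) (fun Y => conormalWeight i Y.2.2) X
      = deriv (conormalWeight i) X.2.2 := by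
    rw [dirDeriv, fderiv_comp_height
      ((contDiffAt_conormalWeight (m := 1) i hz).differentiableAt one_ne_zero), mul_one]
  rw [dirDeriv_dirDeriv_comp_height (contDiffAt_conormalWeight i hz), first_order]
  cases i using Fin.lastCases with
  | last =>
    rw [conormalDir_last, ← add_mul]
    exact mul_nonneg (by linarith [neg_four_le_conormalWeight_last hX]) (sq_nonneg _)
  | cast j =>
    have hderiv : deriv (conormalWeight j.castSucc) = fun _ => 0 := by
      rw [conormalWeight_castSucc, deriv_const']
    simp only [hderiv, deriv_const']
    nlinarith [sq_nonneg (dirDeriv (0, (0, 1)) r X)]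

lemma zop_eq_zero_of_boundary {f : (Fin 2 → ℝ) × ℝ → ℝ} (hf : Differentiable ℝ f)
    (hzero : ∀ y, f (y, 0) = 0) (i : Fin 3) (y : Fin 2 → ℝ) : Zop i f (y, 0) = 0 := by
  cases i using Fin.lastCases with
  | last => rw [zop_last]; simp
  | cast j =>
    rw [zop_castSucc]
    exact dirDeriv_eq_zero_of_const_on_line (a := 0) (hf _) fun h => by
      simpa using hzero (y + h • Pi.single j 1)

lemma zop_eq_zero_of_eventuallyEq_zero {f : (Fin 2 → ℝ) × ℝ → ℝ} {x : (Fin 2 → ℝ) × ℝ}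
    (hf : f =ᶠ[𝓝 x] 0) (i : Fin 3) : Zop i f x = 0 := by
  rw [zop_apply, hf.fderiv_eq]
  simp

lemma fderiv_eq_sum_zop_add_dzD (f : (Fin 2 → ℝ) × ℝ → ℝ) (x u : (Fin 2 → ℝ) × ℝ) :
    fderiv ℝ f x u = ∑ j : Fin 2, u.1 j * Zop j.castSucc f x + u.2 * dzD f x := by
  have hu : u = (∑ j : Fin 2, u.1 j • ((Pi.single j 1 : Fin 2 → ℝ), (0 : ℝ))) + u.2 • (0, 1) := by
    ext k
    · fin_cases k <;> simp
    · simp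
  conv_lhs => rw [hu]
  simp only [map_add, map_sum, map_smul, smul_eq_mul, zop_castSucc, dirDeriv, dzD]

end ConormalFields

section ConormalNorms

variable {f : (Fin 2 → ℝ) × ℝ → ℝ} {x : (Fin 2 → ℝ) × ℝ}

lemma enorm_le_supNormS (f : (Fin 2 → ℝ) × ℝ → ℝ) (hx : x.2 < 0) : ‖f x‖ₑ ≤ supNormS f :=
  le_iSup₂_of_le (f := fun x (_ : x ∈ lowerHalf) => (‖f x‖₊ : ℝ≥0∞)) x hx le_rfl

lemma supNormS_zpow_le_conormInf {k : ℕ} {α : Fin 3 → ℕ} (hα : α ∈ multiIdx k)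
    (f : (Fin 2 → ℝ) × ℝ → ℝ) : supNormS (Zpow α f) ≤ conormInf k f :=
  Finset.single_le_sum (f := fun α => supNormS (Zpow α f)) (fun _ _ => zero_le) hα

lemma supNormS_le_conormInf (k : ℕ) (f : (Fin 2 → ℝ) × ℝ → ℝ) : supNormS f ≤ conormInf k f :=
  supNormS_zpow_le_conormInf (α := 0) (by simp [multiIdx]) f

lemma supNormS_zop_le_conormInf {k : ℕ} (hk : 1 ≤ k) (i : Fin 3) (f : (Fin 2 → ℝ) × ℝ → ℝ) :
    supNormS (Zop i f) ≤ conormInf k f := by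
  have hmem : (Pi.single i 1 : Fin 3 → ℕ) ∈ multiIdx k := by
    simp only [multiIdx, Finset.mem_filter, Finset.mem_Icc]
    refine ⟨⟨fun j => Nat.zero_le _, fun j => ?_⟩, ?_⟩
    · exact (Pi.single_apply i 1 j).le.trans (by split_ifs <;> first | exact hk | exact zero_le)
    · fin_cases i <;> simpa [Pi.single_apply] using hk
  have hzop : Zpow (Pi.single i 1) f = Zop i f := by
    fin_cases i <;> simp [Zpow]
  exact hzop ▸ supNormS_zpow_le_conormInf hmem f

variable (w : ℝ → (Fin 2 → ℝ) × ℝ → Fin 3 → ℝ) (s : ℝ)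

lemma supNormS_zop_le_wE2inf (i k : Fin 3) :
    supNormS (Zop i fun x => w s x k) ≤ wE2inf w s :=
  (supNormS_zop_le_conormInf one_le_two i _).trans
    ((Finset.single_le_sum (f := fun k => conormInf 2 fun x => w s x k) (fun _ _ => zero_le)
      (Finset.mem_univ k)).trans le_self_add)

lemma conormInf_dzD_le_wE2inf (k : Fin 3) :
    conormInf 1 (dzD fun x => w s x k) ≤ wE2inf w s :=
  (Finset.single_le_sum (f := fun k => conormInf 1 (dzD fun x => w s x k)) (fun _ _ => zero_le)
    (Finset.mem_univ k)).trans le_add_self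

lemma enorm_div_le_supNormS_dzD (hf : Differentiable ℝ f) (hzero : f (x.1, 0) = 0)
    (hx : x.2 < 0) : ‖f x / x.2‖ₑ ≤ supNormS (dzD f) := by
  have hderiv (z : ℝ) : HasDerivAt (fun z => f (x.1, z)) (dzD f (x.1, z)) z := by
    simpa [dirDeriv, dzD] using
      hasDerivAt_comp_line (X := (x.1, (0 : ℝ))) (v := ((0 : Fin 2 → ℝ), (1 : ℝ))) (h := z) (hf _)
  obtain ⟨ξ, hξ, hslope⟩ := exists_hasDerivAt_eq_slope _ _ hx
    (fun z _ => (hderiv z).continuousAt.continuousWithinAt) (fun z _ => hderiv z)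
  have hquot : f x / x.2 = dzD f (x.1, ξ) := by
    rw [hslope, hzero, zero_sub, zero_sub, neg_div_neg_eq]
  exact hquot ▸ enorm_le_supNormS (x := (x.1, ξ)) (dzD f) hξ.2

end ConormalNorms

section ConormalCommutator

/-- The commutator `[Z_i, a·∇] f` of a conormal field with the transport by `a` in the half-space,
with the tangential derivatives written as conormal derivatives. -/
noncomputable def conormalCommutator (i : Fin 3) (a : (Fin 2 → ℝ) × ℝ → Fin 3 → ℝ)
    (f : (Fin 2 → ℝ) × ℝ → ℝ) (x : (Fin 2 → ℝ) × ℝ) : ℝ :=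
  ∑ k : Fin 2, Zop i (fun y => a y k.castSucc) x * Zop k.castSucc f x
    + Zop i (fun y => a y 2) x * dzD f x
    - deriv (conormalWeight i) x.2 * a x 2 * fderiv ℝ f x (conormalDir i)

variable {g : (Fin 2 → ℝ) × ℝ → ℝ} {x : (Fin 2 → ℝ) × ℝ}
  {w : ℝ → (Fin 2 → ℝ) × ℝ → Fin 3 → ℝ} {s : ℝ}

-- Vanishing at the boundary lets `g ∂_z f` be rewritten as `(g / z - g) Z₃ f`.
lemma enorm_mul_dzD_le (f : (Fin 2 → ℝ) × ℝ → ℝ) (hg : Differentiable ℝ g)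
    (hzero : g (x.1, 0) = 0) (hx : x.2 < 0) :
    ‖g x * dzD f x‖ₑ ≤ (supNormS (dzD g) + supNormS g) * supNormS (Zop (Fin.last 2) f) := by
  have hz : x.2 ≠ 0 := hx.ne
  have h1z : 1 - x.2 ≠ 0 := by linarith
  have hdivide : g x * dzD f x = (g x / x.2 - g x) * Zop (Fin.last 2) f x := by
    rw [zop_last]
    field_simp
  rw [hdivide, enorm_mul]
  gcongr
  · exact enorm_sub_le.trans
      (add_le_add (enorm_div_le_supNormS_dzD hg hzero hx) (enorm_le_supNormS g hx))
  · exact enorm_le_supNormS _ hx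

lemma enorm_deriv_conormalWeight_last_mul_dzD_le (f : (Fin 2 → ℝ) × ℝ → ℝ)
    (hg : Differentiable ℝ g) (hzero : g (x.1, 0) = 0) (hx : x.2 < 0) :
    ‖deriv (conormalWeight (Fin.last 2)) x.2 * g x * dzD f x‖ₑ
      ≤ supNormS (dzD g) * supNormS (Zop (Fin.last 2) f) := by
  have hz : x.2 ≠ 0 := hx.ne
  have h1z : 0 < 1 - x.2 := by linarith
  have hdivide : deriv (conormalWeight (Fin.last 2)) x.2 * g x * dzD f x
      = (1 - x.2)⁻¹ * (g x / x.2) * Zop (Fin.last 2) f x := by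
    rw [(hasDerivAt_conormalWeight_last (by linarith)).deriv, zop_last]
    field_simp
  have hinv : ‖(1 - x.2)⁻¹‖ₑ ≤ 1 := by
    rw [Real.enorm_of_nonneg (inv_nonneg.2 h1z.le), ENNReal.ofReal_le_one]
    exact inv_le_one_of_one_le₀ (by linarith)
  rw [hdivide, enorm_mul, enorm_mul]
  gcongr
  · exact (mul_le_mul' hinv (enorm_div_le_supNormS_dzD hg hzero hx)).trans_eq (one_mul _)
  · exact enorm_le_supNormS _ hx

lemma enorm_sum_zop_mul_zop_le (i : Fin 3) (f : (Fin 2 → ℝ) × ℝ → ℝ) (hx : x.2 < 0) :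
    ‖∑ k : Fin 2, Zop i (fun y => w s y k.castSucc) x * Zop k.castSucc f x‖ₑ
      ≤ 2 * (wE2inf w s * conormInf 1 f) := by
  calc _ ≤ ∑ k : Fin 2, ‖Zop i (fun y => w s y k.castSucc) x * Zop k.castSucc f x‖ₑ :=
        enorm_sum_le _ _
    _ ≤ ∑ _k : Fin 2, wE2inf w s * conormInf 1 f := by
        gcongr with k
        rw [enorm_mul]
        gcongr
        · exact (enorm_le_supNormS _ hx).trans (supNormS_zop_le_wE2inf w s i _)
        · exact (enorm_le_supNormS _ hx).trans (supNormS_zop_le_conormInf le_rfl _ f)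
    _ = 2 * (wE2inf w s * conormInf 1 f) := by simp

lemma supNormS_dzD_zop_castSucc_le_wE2inf (hw : ContDiff ℝ 2 (w s)) (j : Fin 2) (k : Fin 3) :
    supNormS (dzD (Zop j.castSucc fun x => w s x k)) ≤ wE2inf w s := by
  have hcomm : dzD (Zop j.castSucc fun x => w s x k) = Zop j.castSucc (dzD fun x => w s x k) := by
    funext x
    rw [zop_castSucc, zop_castSucc]
    exact dirDeriv_comm (contDiff_pi.1 hw k).contDiffAt _ _
  rw [hcomm]
  exact (supNormS_zop_le_conormInf le_rfl _ _).trans (conormInf_dzD_le_wE2inf w s k)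

lemma enorm_conormalCommutator_castSucc_le (hw : ContDiff ℝ 2 (w s))
    (hzero : ∀ y, w s (y, 0) 2 = 0) (f : (Fin 2 → ℝ) × ℝ → ℝ) (hx : x.2 < 0) (j : Fin 2) :
    ‖conormalCommutator j.castSucc (w s) f x‖ₑ ≤ 4 * (wE2inf w s * conormInf 1 f) := by
  have hw₃ : ContDiff ℝ 2 fun x => w s x 2 := contDiff_pi.1 hw 2
  have hZw₃ : Differentiable ℝ (Zop j.castSucc fun x => w s x 2) := by
    rw [zop_castSucc]
    exact fun y => (contDiffAt_dirDeriv (m := 1) hw₃.contDiffAt one_add_one_eq_two.le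
      _).differentiableAt one_ne_zero
  have hnormal : ‖Zop j.castSucc (fun y => w s y 2) x * dzD f x‖ₑ
      ≤ (wE2inf w s + wE2inf w s) * conormInf 1 f :=
    (enorm_mul_dzD_le f hZw₃ (zop_eq_zero_of_boundary (hw₃.differentiable two_ne_zero) hzero _ _)
      hx).trans (mul_le_mul'
        (add_le_add (supNormS_dzD_zop_castSucc_le_wE2inf hw j 2) (supNormS_zop_le_wE2inf w s _ _))
        (supNormS_zop_le_conormInf le_rfl _ f))
  rw [conormalCommutator, conormalWeight_castSucc, deriv_const, zero_mul, zero_mul, sub_zero]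
  calc _ ≤ 2 * (wE2inf w s * conormInf 1 f) + (wE2inf w s + wE2inf w s) * conormInf 1 f :=
        (enorm_add_le _ _).trans (add_le_add (enorm_sum_zop_mul_zop_le _ f hx) hnormal)
    _ = 4 * (wE2inf w s * conormInf 1 f) := by ring

lemma enorm_conormalCommutator_last_le (hw : Differentiable ℝ (w s))
    (hzero : ∀ y, w s (y, 0) 2 = 0) (f : (Fin 2 → ℝ) × ℝ → ℝ) (hx : x.2 < 0) :
    ‖conormalCommutator (Fin.last 2) (w s) f x‖ₑ ≤ 4 * (wE2inf w s * conormInf 1 f) := by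
  have hdw₃ : supNormS (dzD fun x => w s x 2) ≤ wE2inf w s :=
    (supNormS_le_conormInf 1 _).trans (conormInf_dzD_le_wE2inf w s 2)
  have hZ₃f : ‖Zop (Fin.last 2) f x‖ₑ ≤ conormInf 1 f :=
    (enorm_le_supNormS _ hx).trans (supNormS_zop_le_conormInf le_rfl _ f)
  have hnormal : ‖Zop (Fin.last 2) (fun y => w s y 2) x * dzD f x‖ₑ
      ≤ wE2inf w s * conormInf 1 f := by
    have hswap : Zop (Fin.last 2) (fun y => w s y 2) x * dzD f x
        = dzD (fun y => w s y 2) x * Zop (Fin.last 2) f x := by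
      simp only [zop_last]
      ring
    rw [hswap, enorm_mul]
    exact mul_le_mul' ((enorm_le_supNormS _ hx).trans hdw₃) hZ₃f
  have hweight : ‖deriv (conormalWeight (Fin.last 2)) x.2 * w s x 2 * dzD f x‖ₑ
      ≤ wE2inf w s * conormInf 1 f :=
    (enorm_deriv_conormalWeight_last_mul_dzD_le f (differentiable_pi.1 hw 2) (hzero _) hx).trans
      (mul_le_mul' hdw₃ (supNormS_zop_le_conormInf le_rfl _ f))
  rw [conormalCommutator, conormalDir_last]
  calc _ ≤ 2 * (wE2inf w s * conormInf 1 f) + wE2inf w s * conormInf 1 f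
          + wE2inf w s * conormInf 1 f :=
        enorm_sub_le.trans (add_le_add ((enorm_add_le _ _).trans
          (add_le_add (enorm_sum_zop_mul_zop_le _ f hx) hnormal)) hweight)
    _ = 4 * (wE2inf w s * conormInf 1 f) := by ring

lemma enorm_conormalCommutator_le (i : Fin 3) (hw : ContDiff ℝ 2 (w s))
    (hzero : ∀ y, w s (y, 0) 2 = 0) (f : (Fin 2 → ℝ) × ℝ → ℝ) (hx : x.2 < 0) :
    ‖conormalCommutator i (w s) f x‖ₑ ≤ 4 * (wE2inf w s * conormInf 1 f) := by
  cases i using Fin.lastCases with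
  | last => exact enorm_conormalCommutator_last_le (hw.differentiable two_ne_zero) hzero f hx
  | cast j => exact enorm_conormalCommutator_castSucc_le hw hzero f hx j

end ConormalCommutator

section SpaceTime

variable {Y : Type*} [NormedAddCommGroup Y] [NormedSpace ℝ Y] {f : ℝ → Y → ℝ} {t : ℝ} {y : Y}

lemma fderiv_eq_dirDeriv_uncurry (hf : DifferentiableAt ℝ (Function.uncurry f) (t, y)) (u : Y) :
    fderiv ℝ (f t) y u = dirDeriv (0, u) (Function.uncurry f) (t, y) := by
  have hslice : HasFDerivAt (f t) ((fderiv ℝ (Function.uncurry f) (t, y)).comp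
      (ContinuousLinearMap.inr ℝ ℝ Y)) y :=
    hf.hasFDerivAt.comp y (hasFDerivAt_prodMk_right t y)
  rw [hslice.fderiv]
  rfl

lemma deriv_eq_dirDeriv_uncurry (hf : DifferentiableAt ℝ (Function.uncurry f) (t, y)) :
    deriv (fun s => f s y) t = dirDeriv (1, 0) (Function.uncurry f) (t, y) := by
  have hline : HasDerivAt (fun s : ℝ => (s, y)) (1, 0) t :=
    (hasDerivAt_id t).prodMk (hasDerivAt_const t y)
  exact (hf.hasFDerivAt.comp_hasDerivAt t hline).deriv

lemma contDiff_slice {F : Type*} [NormedAddCommGroup F] [NormedSpace ℝ F] {f : ℝ → Y → F}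
    {m : WithTop ℕ∞} (hf : ContDiff ℝ m (Function.uncurry f)) (t : ℝ) : ContDiff ℝ m (f t) :=
  hf.comp (contDiff_prodMk_right t)

end SpaceTime

section ConormalBernstein

variable {ε s : ℝ} {w : ℝ → (Fin 2 → ℝ) × ℝ → Fin 3 → ℝ} {ρ 𝓗 : ℝ → (Fin 2 → ℝ) × ℝ → ℝ}
  {x : (Fin 2 → ℝ) × ℝ}

/-- The convection field `w` as a map from space-time to `ℝ² × ℝ`, the form taken by
`convDiff`. -/
def velocityField (w : ℝ → (Fin 2 → ℝ) × ℝ → Fin 3 → ℝ) (X : ℝ × ((Fin 2 → ℝ) × ℝ)) :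
    (Fin 2 → ℝ) × ℝ :=
  (fun j => w X.1 X.2 j.castSucc, w X.1 X.2 2)

lemma contDiff_velocityField {m : WithTop ℕ∞} (hw : ContDiff ℝ m (Function.uncurry w)) :
    ContDiff ℝ m (velocityField w) :=
  (contDiff_pi.2 fun j : Fin 2 => contDiff_pi.1 hw j.castSucc).prodMk (contDiff_pi.1 hw 2)

lemma fderiv_velocityField (hw : DifferentiableAt ℝ (Function.uncurry w) (s, x))
    (u : (Fin 2 → ℝ) × ℝ) :
    fderiv ℝ (velocityField w) (s, x) (0, u)
      = (fun j => fderiv ℝ (fun y => w s y j.castSucc) x u, fderiv ℝ (fun y => w s y 2) x u) := by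
  have hcomponent (k : Fin 3) :
      DifferentiableAt ℝ (Function.uncurry fun t y => w t y k) (s, x) := differentiableAt_pi.1 hw k
  have hfderiv : HasFDerivAt (velocityField w)
      ((ContinuousLinearMap.pi fun j : Fin 2 =>
        fderiv ℝ (Function.uncurry fun t y => w t y j.castSucc) (s, x)).prod
          (fderiv ℝ (Function.uncurry fun t y => w t y 2) (s, x))) (s, x) :=
    (hasFDerivAt_pi.2 fun j : Fin 2 => (hcomponent j.castSucc).hasFDerivAt).prodMk
      (hcomponent 2).hasFDerivAt
  simp only [fderiv_eq_dirDeriv_uncurry (f := fun t y => w t y _) (hcomponent _), hfderiv.fderiv]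
  rfl

lemma convDiff_velocityField (hρ : ContDiff ℝ 2 (Function.uncurry ρ)) :
    convDiff ε (velocityField w) (0, 1) (Function.uncurry ρ) (s, x)
      = deriv (fun t => ρ t x) s
        + (∑ j : Fin 2, w s x j.castSucc * Zop j.castSucc (ρ s) x + w s x 2 * dzD (ρ s) x)
        - ε * dzD (dzD (ρ s)) x := by
  have hdiff : Differentiable ℝ (Function.uncurry ρ) := hρ.differentiable two_ne_zero
  have hslice : dzD (ρ s) = fun y => dirDeriv (0, (0, 1)) (Function.uncurry ρ) (s, y) :=
    funext fun y => fderiv_eq_dirDeriv_uncurry (hdiff _) _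
  have hdzD : Differentiable ℝ (dirDeriv (0, (0, 1)) (Function.uncurry ρ)) := fun X =>
    (contDiffAt_dirDeriv (m := 1) hρ.contDiffAt one_add_one_eq_two.le _).differentiableAt
      one_ne_zero
  have hdiffusion : dzD (dzD (ρ s)) x
      = dirDeriv (0, (0, 1)) (dirDeriv (0, (0, 1)) (Function.uncurry ρ)) (s, x) := by
    rw [hslice]
    exact fderiv_eq_dirDeriv_uncurry (f := fun t y => dirDeriv (0, (0, 1)) (Function.uncurry ρ)
      (t, y)) (hdzD _) _
  have htransport : fderiv ℝ (Function.uncurry ρ) (s, x) (1, velocityField w (s, x))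
      = deriv (fun t => ρ t x) s + fderiv ℝ (ρ s) x (velocityField w (s, x)) := by
    rw [deriv_eq_dirDeriv_uncurry (hdiff _), fderiv_eq_dirDeriv_uncurry (hdiff _), dirDeriv,
      dirDeriv, ← map_add]
    simp
  rw [convDiff, htransport, hdiffusion, fderiv_eq_sum_zop_add_dzD]
  rfl

/-- The Bernstein function of `ρ` for the conormal field `Z_i`, which is
`(Z_i ρ)² + (2ρ)²`. -/
noncomputable def conormalBernstein (i : Fin 3) (ρ : ℝ → (Fin 2 → ℝ) × ℝ → ℝ) :
    ℝ × ((Fin 2 → ℝ) × ℝ) → ℝ :=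
  bernsteinFunction (fun X => conormalWeight i X.2.2) (0, conormalDir i) (Function.uncurry ρ)

/-- The source driving the square root of `conormalBernstein i ρ` when `ρ` is convected by `w` with
right-hand side `𝓗`. -/
noncomputable def conormalBernsteinSource (i : Fin 3) (w : ℝ → (Fin 2 → ℝ) × ℝ → Fin 3 → ℝ)
    (ρ 𝓗 : ℝ → (Fin 2 → ℝ) × ℝ → ℝ) : ℝ × ((Fin 2 → ℝ) × ℝ) → ℝ :=
  bernsteinSource (fun X => conormalWeight i X.2.2) (0, conormalDir i) (velocityField w)
    (Function.uncurry ρ) (Function.uncurry 𝓗)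

lemma conormalBernstein_apply (hρ : DifferentiableAt ℝ (Function.uncurry ρ) (s, x))
    (i : Fin 3) :
    conormalBernstein i ρ (s, x) = Zop i (ρ s) x ^ 2 + (2 * ρ s x) ^ 2 := by
  rw [conormalBernstein, bernsteinFunction, ← fderiv_eq_dirDeriv_uncurry hρ, zop_apply]
  rfl

lemma conormalBernsteinSource_apply (hw : DifferentiableAt ℝ (Function.uncurry w) (s, x))
    (hρ : DifferentiableAt ℝ (Function.uncurry ρ) (s, x))
    (h𝓗 : DifferentiableAt ℝ (Function.uncurry 𝓗) (s, x)) (hx : x.2 < 1) (i : Fin 3) :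
    conormalBernsteinSource i w ρ 𝓗 (s, x)
      = |Zop i (𝓗 s) x - conormalCommutator i (w s) (ρ s) x| + 2 * |𝓗 s x| := by
  have hweight : DifferentiableAt ℝ (conormalWeight i) x.2 :=
    (contDiffAt_conormalWeight (m := 1) i hx).differentiableAt one_ne_zero
  have hgradient (u : (Fin 2 → ℝ) × ℝ) : fderiv ℝ (Function.uncurry ρ) (s, x) (0, u)
      = ∑ j : Fin 2, u.1 j * Zop j.castSucc (ρ s) x + u.2 * dzD (ρ s) x :=
    (fderiv_eq_dirDeriv_uncurry hρ u).symm.trans (fderiv_eq_sum_zop_add_dzD _ _ _)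
  rw [conormalBernsteinSource, bernsteinSource, fderiv_comp_height hweight,
    ← fderiv_eq_dirDeriv_uncurry hρ, ← fderiv_eq_dirDeriv_uncurry h𝓗, hgradient,
    fderiv_velocityField hw, conormalCommutator]
  simp only [zop_apply i, Fin.sum_univ_two, velocityField, Function.uncurry_apply_pair]
  congr 2
  ring

lemma ofReal_conormalBernsteinSource_le (hw : ContDiff ℝ 2 (Function.uncurry w))
    (hρ : DifferentiableAt ℝ (Function.uncurry ρ) (s, x))
    (h𝓗 : DifferentiableAt ℝ (Function.uncurry 𝓗) (s, x))
    (hzero : ∀ y, w s (y, 0) 2 = 0) (hx : x.2 < 0) (i : Fin 3) :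
    ENNReal.ofReal (conormalBernsteinSource i w ρ 𝓗 (s, x))
      ≤ 4 * (wE2inf w s * conormInf 1 (ρ s) + conormInf 1 (𝓗 s)) := by
  have hcommutator : ‖conormalCommutator i (w s) (ρ s) x‖ₑ ≤ 4 * (wE2inf w s * conormInf 1 (ρ s)) :=
    enorm_conormalCommutator_le i (contDiff_slice hw s) hzero _ hx
  have hZ𝓗 : ‖Zop i (𝓗 s) x‖ₑ ≤ conormInf 1 (𝓗 s) :=
    (enorm_le_supNormS _ hx).trans (supNormS_zop_le_conormInf le_rfl i _)
  have h𝓗_le : ‖𝓗 s x‖ₑ ≤ conormInf 1 (𝓗 s) :=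
    (enorm_le_supNormS _ hx).trans (supNormS_le_conormInf 1 _)
  rw [conormalBernsteinSource_apply (hw.differentiable two_ne_zero _) hρ h𝓗 (by linarith),
    ENNReal.ofReal_add (abs_nonneg _) (by positivity), ENNReal.ofReal_mul zero_le_two,
    ← Real.enorm_eq_ofReal_abs, ← Real.enorm_eq_ofReal_abs, ENNReal.ofReal_ofNat]
  calc _ ≤ (conormInf 1 (𝓗 s) + 4 * (wE2inf w s * conormInf 1 (ρ s))) + 2 * conormInf 1 (𝓗 s) :=
        add_le_add (enorm_sub_le.trans (add_le_add hZ𝓗 hcommutator)) (by gcongr)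
    _ = 4 * (wE2inf w s * conormInf 1 (ρ s)) + 3 * conormInf 1 (𝓗 s) := by ring
    _ ≤ 4 * (wE2inf w s * conormInf 1 (ρ s)) + 4 * conormInf 1 (𝓗 s) := by gcongr; norm_num
    _ = _ := (mul_add _ _ _).symm

lemma convDiff_velocityField_eventuallyEq {T : ℝ} (hρ : ContDiff ℝ 2 (Function.uncurry ρ))
    (hpde : ∀ t ∈ Ioo 0 T, ∀ x ∈ lowerHalf,
      deriv (fun s => ρ s x) t
        + (∑ j : Fin 2, w t x j.castSucc * Zop j.castSucc (ρ t) x + w t x 2 * dzD (ρ t) x)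
      = ε * dzD (dzD (ρ t)) x + 𝓗 t x)
    {X : ℝ × ((Fin 2 → ℝ) × ℝ)} (ht : X.1 ∈ Ioo 0 T) (hX : X.2.2 < 0) :
    convDiff ε (velocityField w) (0, 1) (Function.uncurry ρ) =ᶠ[𝓝 X] Function.uncurry 𝓗 := by
  have htime : ∀ᶠ Z : ℝ × ((Fin 2 → ℝ) × ℝ) in 𝓝 X, Z.1 ∈ Ioo 0 T :=
    continuous_fst.continuousAt.eventually (isOpen_Ioo.mem_nhds ht)
  have hheight : ∀ᶠ Z : ℝ × ((Fin 2 → ℝ) × ℝ) in 𝓝 X, Z.2.2 < 0 :=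
    (continuous_snd.comp continuous_snd).continuousAt.eventually_lt continuousAt_const hX
  filter_upwards [htime, hheight] with Z hZt hZx
  rw [← Prod.mk.eta (p := Z), convDiff_velocityField hρ, hpde Z.1 hZt Z.2 hZx, add_sub_cancel_left]
  rfl

variable {X : ℝ × ((Fin 2 → ℝ) × ℝ)}

lemma contDiffAt_conormalWeight_height {m : WithTop ℕ∞} (i : Fin 3) (hX : X.2.2 ≤ 0) :
    ContDiffAt ℝ m (fun Z : ℝ × ((Fin 2 → ℝ) × ℝ) => conormalWeight i Z.2.2) X :=
  (contDiffAt_conormalWeight i (by linarith)).comp X (contDiffAt_snd.comp X contDiffAt_snd)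

lemma contDiffAt_conormalBernstein (hρ : ContDiff ℝ 3 (Function.uncurry ρ)) (i : Fin 3)
    (hX : X.2.2 ≤ 0) : ContDiffAt ℝ 2 (conormalBernstein i ρ) X :=
  contDiffAt_bernsteinFunction (by norm_num) (contDiffAt_conormalWeight_height i hX) hρ.contDiffAt

lemma continuousAt_conormalBernsteinSource (hw : ContDiff ℝ 1 (Function.uncurry w))
    (hρ : ContDiff ℝ 1 (Function.uncurry ρ)) (h𝓗 : ContDiff ℝ 1 (Function.uncurry 𝓗)) (i : Fin 3)
    (hX : X.2.2 ≤ 0) : ContinuousAt (conormalBernsteinSource i w ρ 𝓗) X :=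
  continuousAt_bernsteinSource (contDiffAt_conormalWeight_height i hX)
    (contDiff_velocityField hw).contDiffAt hρ.contDiffAt h𝓗.contDiffAt

lemma convDiff_conormalBernstein_le (hε : 0 ≤ ε) (hw : ContDiff ℝ 1 (Function.uncurry w))
    (hρ : ContDiff ℝ 3 (Function.uncurry ρ))
    (heq : convDiff ε (velocityField w) (0, 1) (Function.uncurry ρ) =ᶠ[𝓝 X] Function.uncurry 𝓗)
    (i : Fin 3) (hX : X.2.2 ≤ 0) :
    convDiff ε (velocityField w) (0, 1) (conormalBernstein i ρ) X
      ≤ 2 * √(conormalBernstein i ρ X) * conormalBernsteinSource i w ρ 𝓗 X :=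
  convDiff_bernsteinFunction_le hε (contDiffAt_conormalWeight_height i hX) hρ.contDiffAt
    ((contDiff_velocityField hw).differentiable one_ne_zero X) heq
    (conormalWeight_bernstein_condition i hX)

lemma enorm_zop_le_ofReal_sqrt_conormalBernstein
    (hρ : DifferentiableAt ℝ (Function.uncurry ρ) (s, x)) (i : Fin 3) :
    ‖Zop i (ρ s) x‖ₑ ≤ ENNReal.ofReal √(conormalBernstein i ρ (s, x)) := by
  rw [Real.enorm_eq_ofReal_abs, conormalBernstein_apply hρ]
  exact ENNReal.ofReal_le_ofReal (Real.abs_le_sqrt (le_add_of_nonneg_right (sq_nonneg _)))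

lemma abs_le_toReal_supNormS {f : (Fin 2 → ℝ) × ℝ → ℝ} (hf : supNormS f ≠ ⊤) (hx : x.2 < 0) :
    |f x| ≤ (supNormS f).toReal := by
  rw [← Real.norm_eq_abs, ← toReal_enorm]
  exact ENNReal.toReal_mono hf (enorm_le_supNormS f hx)

lemma conormalBernstein_le_of_parabolicBoundary {T K : ℝ} (i : Fin 3)
    (hρ : ContDiff ℝ 1 (Function.uncurry ρ))
    (hsupp : ∀ t ∈ Icc 0 T, ∀ x : (Fin 2 → ℝ) × ℝ, x.2 ≤ -K → ρ t x = 0)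
    (hdirichlet : ∀ t ∈ Icc 0 T, ∀ y : Fin 2 → ℝ, ρ t (y, 0) = 0)
    (hZρ₀ : supNormS (Zop i (ρ 0)) ≠ ⊤) (hρ₀ : supNormS (ρ 0) ≠ ⊤)
    (hs : s ∈ Icc 0 T) (hx : x.2 ≤ 0)
    (hbdry : s = 0 ∨ x.2 < -K ∨ x.2 = 0) :
    conormalBernstein i ρ (s, x)
      ≤ ((supNormS (Zop i (ρ 0))).toReal + 2 * (supNormS (ρ 0)).toReal) ^ 2 := by
  rw [conormalBernstein_apply (hρ.differentiable one_ne_zero _)]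
  have of_vanishing (hZ : Zop i (ρ s) x = 0) (h : ρ s x = 0) : Zop i (ρ s) x ^ 2 + (2 * ρ s x) ^ 2
      ≤ ((supNormS (Zop i (ρ 0))).toReal + 2 * (supNormS (ρ 0)).toReal) ^ 2 := by
    rw [hZ, h]
    simpa using sq_nonneg _
  obtain hx₀ | hx₀ := hx.eq_or_lt
  · obtain ⟨y, z⟩ := x
    obtain rfl : z = 0 := hx₀
    exact of_vanishing (zop_eq_zero_of_boundary
      ((contDiff_slice hρ s).differentiable one_ne_zero) (hdirichlet s hs) i y) (hdirichlet s hs y)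
  obtain rfl | hxK | hx' := hbdry
  · have hZ := abs_le_toReal_supNormS hZρ₀ hx₀
    have h := abs_le_toReal_supNormS hρ₀ hx₀
    rw [← sq_abs (Zop i (ρ 0) x), mul_pow, ← sq_abs (ρ 0 x)]
    nlinarith [abs_nonneg (Zop i (ρ 0) x), abs_nonneg (ρ 0 x)]
  · have hlocal : ρ s =ᶠ[𝓝 x] 0 :=
      (continuous_snd.continuousAt.eventually_lt continuousAt_const hxK).mono
        fun y hy => hsupp s hs y (le_of_lt hy)
    exact of_vanishing (zop_eq_zero_of_eventuallyEq_zero hlocal i) hlocal.eq_of_nhds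
  · exact absurd hx' hx₀.ne

lemma ofReal_sqrt_conormalBernstein_le {T K B m : ℝ} (hε : 0 ≤ ε)
    (hw : ContDiff ℝ 2 (Function.uncurry w)) (hρ : ContDiff ℝ 3 (Function.uncurry ρ))
    (h𝓗 : ContDiff ℝ 1 (Function.uncurry 𝓗))
    (hw_bound : ∀ t ∈ Ioo 0 T, ∀ x ∈ lowerHalf, ∀ j : Fin 2, |w t x j.castSucc| ≤ B)
    (hw_zero : ∀ t ∈ Icc 0 T, ∀ y : Fin 2 → ℝ, w t (y, 0) 2 = 0)
    (hpde : ∀ t ∈ Ioo 0 T, ∀ x ∈ lowerHalf,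
      deriv (fun s => ρ s x) t
        + (∑ j : Fin 2, w t x j.castSucc * Zop j.castSucc (ρ t) x + w t x 2 * dzD (ρ t) x)
      = ε * dzD (dzD (ρ t)) x + 𝓗 t x)
    (i : Fin 3) (hm : 0 ≤ m)
    (hbdry : ∀ X : ℝ × ((Fin 2 → ℝ) × ℝ), X.1 ∈ Icc 0 T → X.2.2 ≤ 0 →
      X.1 = 0 ∨ X.2.2 < -K ∨ X.2.2 = 0 → conormalBernstein i ρ X ≤ m ^ 2)
    {t : ℝ} (ht : t ∈ Icc 0 T) (hx : x.2 ≤ 0) :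
    ENNReal.ofReal √(conormalBernstein i ρ (t, x)) ≤ ENNReal.ofReal m
      + 4 * ∫⁻ s in Icc 0 t, wE2inf w s * conormInf 1 (ρ s) + conormInf 1 (𝓗 s) := by
  have hw₁ : ContDiff ℝ 1 (Function.uncurry w) := hw.of_le one_le_two
  have hρ₁ : ContDiff ℝ 1 (Function.uncurry ρ) := hρ.of_le (by norm_num)
  rw [← lintegral_const_mul' 4 _ (by simp)]
  exact ofReal_sqrt_le_add_lintegral (G := conormalBernsteinSource i w ρ 𝓗) hε (abs_nonneg B) hm
    (fun X hX => (contDiffAt_conormalBernstein hρ i hX).continuousAt.continuousWithinAt)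
    (fun X hX => contDiffAt_conormalBernstein hρ i hX.le)
    (fun X hX => (continuousAt_conormalBernsteinSource hw₁ hρ₁ h𝓗 i hX).continuousWithinAt)
    (fun X => bernsteinSource_nonneg)
    (fun X ht hX j => (hw_bound X.1 ht X.2 hX j).trans (le_abs_self B))
    (fun X ht hX => convDiff_conormalBernstein_le hε hw₁ hρ
      (convDiff_velocityField_eventuallyEq (hρ.of_le (by norm_num)) hpde ht hX) i hX.le)
    hbdry
    (fun s hs x hx => ofReal_conormalBernsteinSource_le hw (hρ₁.differentiable one_ne_zero _)
      (h𝓗.differentiable one_ne_zero _) (hw_zero s hs) hx i)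
    ht hx

end ConormalBernstein

theorem fokker_planck_conormal_linfty_general {T ε K B : ℝ}
    {w : ℝ → (Fin 2 → ℝ) × ℝ → Fin 3 → ℝ} {ρ 𝓗 : ℝ → (Fin 2 → ℝ) × ℝ → ℝ} (hε : 0 ≤ ε)
    (hw : ContDiff ℝ 2 (Function.uncurry w)) (hρ : ContDiff ℝ 3 (Function.uncurry ρ))
    (h𝓗 : ContDiff ℝ 1 (Function.uncurry 𝓗))
    (hw_bound : ∀ t ∈ Ioo 0 T, ∀ x ∈ lowerHalf, ∀ j : Fin 2, |w t x j.castSucc| ≤ B)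
    (hw_zero : ∀ t ∈ Icc 0 T, ∀ y : Fin 2 → ℝ, w t (y, 0) 2 = 0)
    (hsupp : ∀ t ∈ Icc 0 T, ∀ x : (Fin 2 → ℝ) × ℝ, x.2 ≤ -K → ρ t x = 0)
    (hpde : ∀ t ∈ Ioo 0 T, ∀ x ∈ lowerHalf,
      deriv (fun s => ρ s x) t
        + (∑ j : Fin 2, w t x j.castSucc * Zop j.castSucc (ρ t) x + w t x 2 * dzD (ρ t) x)
      = ε * dzD (dzD (ρ t)) x + 𝓗 t x)
    (hdirichlet : ∀ t ∈ Icc 0 T, ∀ y : Fin 2 → ℝ, ρ t (y, 0) = 0)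
    (i : Fin 3) {t : ℝ} (ht : t ∈ Icc 0 T) :
    supNormS (Zop i (ρ t))
      ≤ 4 * (supNormS (Zop i (ρ 0)) + supNormS (ρ 0)
        + ∫⁻ s in Icc 0 t, wE2inf w s * conormInf 1 (ρ s) + conormInf 1 (𝓗 s)) := by
  by_cases hZρ₀ : supNormS (Zop i (ρ 0)) = ⊤
  · simp [hZρ₀]
  by_cases hρ₀ : supNormS (ρ 0) = ⊤
  · simp [hρ₀]
  have hρ₁ : ContDiff ℝ 1 (Function.uncurry ρ) := hρ.of_le (by norm_num)
  refine iSup₂_le fun x hx => ?_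
  calc (‖Zop i (ρ t) x‖₊ : ℝ≥0∞)
    _ ≤ ENNReal.ofReal √(conormalBernstein i ρ (t, x)) :=
        enorm_zop_le_ofReal_sqrt_conormalBernstein (hρ₁.differentiable one_ne_zero _) i
    _ ≤ supNormS (Zop i (ρ 0)) + 2 * supNormS (ρ 0)
        + 4 * ∫⁻ s in Icc 0 t, wE2inf w s * conormInf 1 (ρ s) + conormInf 1 (𝓗 s) := by
      refine (ofReal_sqrt_conormalBernstein_le hε hw hρ h𝓗 hw_bound hw_zero hpde i (by positivity)
        (fun X => conormalBernstein_le_of_parabolicBoundary i hρ₁ hsupp hdirichlet hZρ₀ hρ₀)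
        ht (le_of_lt hx)).trans_eq ?_
      rw [ENNReal.ofReal_add (by positivity) (by positivity), ENNReal.ofReal_mul zero_le_two,
        ENNReal.ofReal_toReal hZρ₀, ENNReal.ofReal_toReal hρ₀, ENNReal.ofReal_ofNat]
    _ ≤ 4 * supNormS (Zop i (ρ 0)) + 4 * supNormS (ρ 0)
        + 4 * ∫⁻ s in Icc 0 t, wE2inf w s * conormInf 1 (ρ s) + conormInf 1 (𝓗 s) := by
      gcongr
      · exact le_mul_of_one_le_left zero_le (by norm_num)
      · norm_num
    _ = _ := by ring

/-- Lemma 9.6 of the paper: `L^∞` conormal estimate for a convection–diffusion equation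
`∂_t ρ + w·∇ρ = ε ∂_zz ρ + 𝓗` in the half-space with homogeneous Dirichlet boundary
condition and a convection field whose normal component vanishes at the boundary. -/
theorem fokker_planck_conormal_linfty :
    ∃ C : ℝ, 0 < C ∧
      ∀ (T ε K : ℝ), 0 < T → 0 < ε → 0 < K →
        ∀ (w : ℝ → ((Fin 2 → ℝ) × ℝ) → Fin 3 → ℝ)
          (ρ 𝓗 : ℝ → ((Fin 2 → ℝ) × ℝ) → ℝ),
          -- smoothness
          ContDiff ℝ (⊤ : ℕ∞) (fun p : ℝ × ((Fin 2 → ℝ) × ℝ) => w p.1 p.2) →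
          ContDiff ℝ (⊤ : ℕ∞) (fun p : ℝ × ((Fin 2 → ℝ) × ℝ) => ρ p.1 p.2) →
          ContDiff ℝ (⊤ : ℕ∞) (fun p : ℝ × ((Fin 2 → ℝ) × ℝ) => 𝓗 p.1 p.2) →
          -- `w` is bounded together with all its partial derivatives on the domain
          (∀ n : ℕ, ∃ B : ℝ, ∀ t ∈ Set.Icc 0 T, ∀ x : (Fin 2 → ℝ) × ℝ, x.2 ≤ 0 →
            ‖iteratedFDeriv ℝ n (fun p : ℝ × ((Fin 2 → ℝ) × ℝ) => w p.1 p.2) (t, x)‖ ≤ B) →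
          -- the normal component of `w` vanishes at the boundary
          (∀ t ∈ Set.Icc 0 T, ∀ y : Fin 2 → ℝ, w t (y, 0) 2 = 0) →
          -- `ρ` and `𝓗` vanish for `z ≤ −K`
          (∀ t ∈ Set.Icc 0 T, ∀ x : (Fin 2 → ℝ) × ℝ, x.2 ≤ -K → ρ t x = 0 ∧ 𝓗 t x = 0) →
          -- all the quantities appearing in the estimate are finite
          (∀ s ∈ Set.Icc 0 T,
            (∀ i : Fin 3, supNormS (Zop i (ρ s)) ≠ ⊤) ∧
            supNormS (ρ s) ≠ ⊤ ∧ wE2inf w s ≠ ⊤ ∧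
            supNormS (dzD (dzD (fun x => w s x 2))) ≠ ⊤ ∧
            conormInf 1 (ρ s) ≠ ⊤ ∧ conormL2 4 (ρ s) ≠ ⊤ ∧ conormInf 1 (𝓗 s) ≠ ⊤) →
          -- the equation `∂_t ρ + w·∇ρ = ε ∂_zz ρ + 𝓗` on `(0,T) × S`
          (∀ t ∈ Set.Ioo 0 T, ∀ x ∈ lowerHalf,
            deriv (fun s => ρ s x) t
              + (w t x 0 * fderiv ℝ (ρ t) x (Pi.single 0 1, (0 : ℝ))
                + w t x 1 * fderiv ℝ (ρ t) x (Pi.single 1 1, (0 : ℝ))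
                + w t x 2 * dzD (ρ t) x)
            = ε * dzD (dzD (ρ t)) x + 𝓗 t x) →
          -- the homogeneous Dirichlet boundary condition `ρ(t,y,0) = 0`
          (∀ t ∈ Set.Icc 0 T, ∀ y : Fin 2 → ℝ, ρ t (y, 0) = 0) →
          -- conclusion
          ∀ i : Fin 3, ∀ t ∈ Set.Icc 0 T,
            supNormS (Zop i (ρ t))
              ≤ ENNReal.ofReal C *
                (supNormS (Zop i (ρ 0)) + supNormS (ρ 0)
                  + ∫⁻ s in Set.Icc 0 t,
                      ((wE2inf w s + supNormS (dzD (dzD (fun x => w s x 2))))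
                          * (conormInf 1 (ρ s) + conormL2 4 (ρ s))
                        + conormInf 1 (𝓗 s))) := by
  refine ⟨4, by norm_num, fun T ε K _ hε _ w ρ 𝓗 hw hρ h𝓗 hw_bound hw_zero hsupp _ hpde
    hdirichlet i t ht => ?_⟩
  obtain ⟨B, hB⟩ := hw_bound 0
  have hw_le (s) (hs : s ∈ Set.Ioo 0 T) (x) (hx : x ∈ lowerHalf) (j : Fin 2) :
      |w s x j.castSucc| ≤ B :=
    (norm_le_pi_norm (w s x) _).trans <| by
      simpa using hB s (Set.Ioo_subset_Icc_self hs) x (le_of_lt hx)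
  refine (fokker_planck_conormal_linfty_general hε.le (hw.of_le (by norm_cast))
    (hρ.of_le (by norm_cast)) (h𝓗.of_le (by norm_cast)) hw_le hw_zero
    (fun s hs x hx => (hsupp s hs x hx).1) (fun s hs x hx => ?_) hdirichlet i ht).trans ?_
  · rw [Fin.sum_univ_two]
    exact hpde s hs x hx
  · rw [ENNReal.ofReal_ofNat]
    gcongr
    · exact le_self_add
    · exact le_self_add
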